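/- arXiv:1706.01313 — 7 statements merged into one kernel-verified Lean document; each statement's English description precedes it below -/
import Mathlib

section
/- Let S be a semigroup with a finite choice of generators X via π : X⁺ → S. Then the global cogrowth rate satisfies γ^{S,X} ≥ √|X|, and equality γ^{S,X} = √|X| holds if and only if either π is injective (i.e. S is a free semigroup freely generated by X) or |X| = 1. -/
/-!
Write `k` for the number of generators. The diagonal pairs `(w, w)` give `γ(2m) ≥ k ^ m`, hence
`√k ≤ γ`. If `π` is injective there are no other pairs, and if `k = 1` then `γ(n) ≤ n + 1`; in both
cases `γ ≤ √k`.

Conversely, let `k ≥ 2` and `π u = π v` with `u ≠ v`. If `|v| < |u|`, choose a letter `x` different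
from the letter of `u` at position `|v|`; then `uxvx` and `vxux` have the same length and the same
image and differ at position `|v|`. So for some `m ≥ 1` there are distinct words of length `m` with
the same image, and the number `c` of pairs of words of length `m` with equal images is greater
than `k ^ m` (`exists_pow_lt_card_eqPairs`). Concatenating blocks of equal length is injective and
respects `π`, so `γ(2mj) ≥ c ^ j` (`card_eqPairs_pow_le`), which gives
`γ ≥ c ^ (1 / 2m) > √k`.
-/

open Filter

/-- The global cogrowth function. -/
noncomputable def gammaFn {X : Type} {S : Type*} [Mul S]
    (π : FreeSemigroup X →ₙ* S) (n : ℕ) : ℕ :=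
  Nat.card {p : FreeSemigroup X × FreeSemigroup X //
    p.1.length + p.2.length = n ∧ π p.1 = π p.2}

/-- The global cogrowth rate. -/
noncomputable def gammaRate {X : Type} {S : Type*} [Mul S]
    (π : FreeSemigroup X →ₙ* S) : ℝ :=
  Filter.atTop.limsup (fun n : ℕ => (gammaFn π n : ℝ) ^ (1 / (n : ℝ)))

namespace Cogrowth

variable {X : Type} {S : Type*}

/-! ### Words as lists -/

/-- The list of letters of a nonempty word. -/
def letters (w : FreeSemigroup X) : List X := w.head :: w.tail

theorem letters_injective : Function.Injective (letters (X := X)) := by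
  rintro ⟨a, l⟩ ⟨b, m⟩ h
  simp only [letters, List.cons.injEq] at h
  obtain ⟨rfl, rfl⟩ := h
  rfl

theorem letters_mul (u v : FreeSemigroup X) : letters (u * v) = letters u ++ letters v := by
  simp [letters]

theorem length_letters (w : FreeSemigroup X) : (letters w).length = w.length := by
  simp [letters, FreeSemigroup.length]

theorem one_le_length (w : FreeSemigroup X) : 1 ≤ w.length := by
  simp [FreeSemigroup.length]

theorem mul_inj_of_length {u v u' v' : FreeSemigroup X} (hl : u.length = u'.length)
    (h : u * v = u' * v') : u = u' ∧ v = v' := by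
  have h2 := congrArg letters h
  rw [letters_mul, letters_mul] at h2
  obtain ⟨h3, h4⟩ := List.append_inj h2 (by simpa [length_letters] using hl)
  exact ⟨letters_injective h3, letters_injective h4⟩

theorem card_words [Fintype X] {m : ℕ} (hm : 1 ≤ m) :
    Nat.card {w : FreeSemigroup X // w.length = m} = Fintype.card X ^ m := by
  classical
  have e : {w : FreeSemigroup X // w.length = m} ≃ List.Vector X m :=
    { toFun := fun w => ⟨letters w.1, by rw [length_letters]; exact w.2⟩
      invFun := fun l => ⟨⟨l.1.head (by
            intro h0; have := l.2; rw [h0] at this; simp at this; omega), l.1.tail⟩, by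
          have := l.2
          simp [FreeSemigroup.length]; omega⟩
      left_inv := fun w => by simp [letters]
      right_inv := fun l => by
        apply Subtype.ext
        simp [letters] }
  rw [Nat.card_congr e, Nat.card_eq_fintype_card, card_vector]

theorem finite_words [Fintype X] (m : ℕ) : Finite {w : FreeSemigroup X // w.length = m} := by
  have : Finite (List.Vector X m) := inferInstance
  let f : {w : FreeSemigroup X // w.length = m} → List.Vector X m :=
    fun w => ⟨letters w.1, by rw [length_letters]; exact w.2⟩
  refine Finite.of_injective f ?_
  intro a b h
  exact Subtype.ext (letters_injective (congrArg Subtype.val h))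

/-! ### Pairs of words with equal images -/

variable [Semigroup S] (π : FreeSemigroup X →ₙ* S)

/-- The pairs counted by `gammaFn π n`. -/
abbrev Pairs (n : ℕ) : Type :=
  {p : FreeSemigroup X × FreeSemigroup X // p.1.length + p.2.length = n ∧ π p.1 = π p.2}

/-- Pairs of words, both of length `m`, with the same image under `π`. -/
abbrev EqPairs (m : ℕ) : Type :=
  {p : FreeSemigroup X × FreeSemigroup X //
    (p.1.length = m ∧ p.2.length = m) ∧ π p.1 = π p.2}

/-- A pair is determined by the length of its first word and the concatenation of both words. -/
theorem pairs_injection (n : ℕ) : ∃ f : Pairs π n → Fin (n + 1) × List.Vector X n,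
    Function.Injective f := by
  refine ⟨fun p => (⟨p.1.1.length, by have := p.2.1; omega⟩,
    ⟨letters (p.1.1 * p.1.2), by
      rw [letters_mul, List.length_append, length_letters, length_letters]; exact p.2.1⟩), ?_⟩
  intro p q h
  have hfst : p.1.1.length = q.1.1.length := congrArg (fun z => z.1.val) h
  have hsnd : letters (p.1.1 * p.1.2) = letters (q.1.1 * q.1.2) := congrArg (fun z => z.2.val) h
  obtain ⟨h1, h2⟩ := mul_inj_of_length hfst (letters_injective hsnd)
  exact Subtype.ext (Prod.ext h1 h2)

theorem finite_pairs [Fintype X] (n : ℕ) : Finite (Pairs π n) := by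
  obtain ⟨f, hf⟩ := pairs_injection π n
  exact Finite.of_injective f hf

theorem gammaFn_le [Fintype X] (n : ℕ) : gammaFn π n ≤ (n + 1) * Fintype.card X ^ n := by
  obtain ⟨f, hf⟩ := pairs_injection π n
  have := Nat.card_le_card_of_injective f hf
  simpa [gammaFn] using this

theorem eqPairs_injection (m : ℕ) : ∃ f : EqPairs π m → Pairs π (2 * m),
    Function.Injective f := by
  refine ⟨fun p => ⟨p.1, by have := p.2.1; omega, p.2.2⟩, ?_⟩
  intro p q h
  have h' : p.1 = q.1 := congrArg (fun z => z.1) h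
  exact Subtype.ext h'

theorem finite_eqPairs [Fintype X] (m : ℕ) : Finite (EqPairs π m) := by
  obtain ⟨f, hf⟩ := eqPairs_injection π m
  have := finite_pairs π (2 * m)
  exact Finite.of_injective f hf

theorem card_eqPairs_le [Fintype X] (m : ℕ) : Nat.card (EqPairs π m) ≤ gammaFn π (2 * m) := by
  obtain ⟨f, hf⟩ := eqPairs_injection π m
  have := finite_pairs π (2 * m)
  exact Nat.card_le_card_of_injective f hf

/-- Blockwise concatenation of pairs is injective because the blocks have fixed length. -/
theorem card_eqPairs_mul_le [Fintype X] (m n : ℕ) :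
    Nat.card (EqPairs π m) * Nat.card (EqPairs π n) ≤ Nat.card (EqPairs π (m + n)) := by
  have := finite_eqPairs π (m + n)
  rw [← Nat.card_prod]
  refine Nat.card_le_card_of_injective
    (fun pq => ⟨(pq.1.1.1 * pq.2.1.1, pq.1.1.2 * pq.2.1.2), ?_⟩) ?_
  · obtain ⟨⟨p, ⟨h1, h2⟩, h3⟩, ⟨q, ⟨h4, h5⟩, h6⟩⟩ := pq
    simp [FreeSemigroup.length_mul, h1, h2, h3, h4, h5, h6]
  · rintro ⟨⟨p, ⟨h1, h2⟩, h3⟩, ⟨q, ⟨h4, h5⟩, h6⟩⟩ ⟨⟨p', ⟨h1', h2'⟩, h3'⟩, ⟨q', ⟨h4', h5'⟩, h6'⟩⟩ h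
    simp only [Subtype.mk.injEq, Prod.mk.injEq] at h
    obtain ⟨a1, a2⟩ := mul_inj_of_length (h1.trans h1'.symm) h.1
    obtain ⟨a3, a4⟩ := mul_inj_of_length (h2.trans h2'.symm) h.2
    simp [Prod.ext_iff, a1, a2, a3, a4]

theorem card_eqPairs_pow_le [Fintype X] (m j : ℕ) :
    Nat.card (EqPairs π m) ^ (j + 1) ≤ Nat.card (EqPairs π (m * (j + 1))) := by
  induction j with
  | zero => simp
  | succ j ih =>
    rw [pow_succ, Nat.mul_succ m (j + 1)]
    exact (Nat.mul_le_mul_right _ ih).trans (card_eqPairs_mul_le π _ _)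

theorem pow_le_card_eqPairs [Fintype X] {m : ℕ} (hm : 1 ≤ m) :
    Fintype.card X ^ m ≤ Nat.card (EqPairs π m) := by
  have := finite_eqPairs π m
  rw [← card_words hm]
  refine Nat.card_le_card_of_injective (fun w => ⟨(w.1, w.1), ⟨w.2, w.2⟩, rfl⟩) ?_
  intro a b h
  simp only [Subtype.mk.injEq, Prod.mk.injEq] at h
  exact Subtype.ext h.1

theorem pow_lt_card_eqPairs [Fintype X] {u v : FreeSemigroup X} (huv : u ≠ v)
    (hl : u.length = v.length) (hπ : π u = π v) :
    Fintype.card X ^ u.length < Nat.card (EqPairs π u.length) := by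
  have := finite_eqPairs π u.length
  have := finite_words (X := X) u.length
  rw [← card_words (one_le_length u)]
  -- The diagonal together with the pair `(u, v)`.
  have key : Nat.card (Option {w : FreeSemigroup X // w.length = u.length}) ≤
      Nat.card (EqPairs π u.length) := by
    refine Nat.card_le_card_of_injective (fun o => match o with
      | none => ⟨(u, v), ⟨rfl, hl.symm⟩, hπ⟩
      | some w => ⟨(w.1, w.1), ⟨w.2, w.2⟩, rfl⟩) ?_
    rintro (_ | a) (_ | b) h
    · rfl
    · simp only [Subtype.mk.injEq, Prod.mk.injEq] at h
      exact absurd (h.1.trans h.2.symm) huv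
    · simp only [Subtype.mk.injEq, Prod.mk.injEq] at h
      exact absurd (h.1.symm.trans h.2) huv
    · simp only [Subtype.mk.injEq, Prod.mk.injEq] at h
      rw [Subtype.ext h.1]
  rw [Finite.card_option] at key
  omega

/-- With at least two letters, two words of different lengths with the same image yield two
distinct words of the same length with the same image, namely `uxvx` and `vxux` for a letter `x`
other than the letter of `u` at position `|v|`. -/
theorem exists_eq_length_of_lt [Nontrivial X] {u v : FreeSemigroup X} (hlt : v.length < u.length)
    (hπ : π u = π v) :
    ∃ a b : FreeSemigroup X, a ≠ b ∧ a.length = b.length ∧ π a = π b := by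
  have hlt' : (letters v).length < (letters u).length := by simpa [length_letters] using hlt
  obtain ⟨x, hx⟩ := exists_ne ((letters u)[(letters v).length])
  let y : FreeSemigroup X := ⟨x, []⟩
  have hy : letters y = [x] := rfl
  refine ⟨u * (y * (v * y)), v * (y * (u * y)), ?_, ?_, ?_⟩
  · intro h
    have h2 := congrArg (fun w => (letters w)[(letters v).length]?) h
    simp only [letters_mul, hy] at h2
    rw [List.getElem?_append_left hlt', List.getElem?_append_right le_rfl] at h2
    simp only [List.getElem?_eq_getElem hlt', Nat.sub_self] at h2
    simp at h2
    exact hx h2.symm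
  · simp only [FreeSemigroup.length_mul]; omega
  · simp [hπ]

theorem exists_pow_lt_card_eqPairs [Fintype X] [Nontrivial X] (h : ¬ Function.Injective π) :
    ∃ m, 1 ≤ m ∧ Fintype.card X ^ m < Nat.card (EqPairs π m) := by
  have : ∃ a b : FreeSemigroup X, a ≠ b ∧ a.length = b.length ∧ π a = π b := by
    simp only [Function.Injective] at h
    push Not at h
    obtain ⟨u, v, huv, hne⟩ := h
    rcases lt_trichotomy u.length v.length with hl | hl | hl
    · exact exists_eq_length_of_lt π hl huv.symm
    · exact ⟨u, v, hne, hl, huv⟩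
    · exact exists_eq_length_of_lt π hl huv
  obtain ⟨a, b, hab, hl, hπ⟩ := this
  exact ⟨a.length, one_le_length a, pow_lt_card_eqPairs π hab hl hπ⟩

/-! ### Growth rates -/

theorem root_le [Fintype X] (n : ℕ) (hn : n ≠ 0) :
    (gammaFn π n : ℝ) ^ (1 / (n : ℝ)) ≤ ((n : ℝ) + 1) ^ (1 / (n : ℝ)) * Fintype.card X := by
  calc (gammaFn π n : ℝ) ^ (1 / (n : ℝ))
      ≤ (((n : ℝ) + 1) * (Fintype.card X : ℝ) ^ n) ^ (1 / (n : ℝ)) := by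
        gcongr
        exact_mod_cast gammaFn_le π n
    _ = ((n : ℝ) + 1) ^ (1 / (n : ℝ)) * Fintype.card X := by
        rw [Real.mul_rpow (by positivity) (by positivity), one_div,
          Real.pow_rpow_inv_natCast (by positivity) hn]

theorem tendsto_succ_root :
    Tendsto (fun n : ℕ => ((n : ℝ) + 1) ^ (1 / (n : ℝ))) atTop (nhds 1) := by
  have h := (tendsto_rpow_div_mul_add 1 1 (-1) zero_ne_one).comp
    (tendsto_atTop_add_const_right atTop (1 : ℝ) tendsto_natCast_atTop_atTop)
  refine h.congr fun n => ?_
  simp [Function.comp]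

theorem tendsto_upper [Fintype X] :
    Tendsto (fun n : ℕ => ((n : ℝ) + 1) ^ (1 / (n : ℝ)) * Fintype.card X) atTop
      (nhds (Fintype.card X)) := by
  simpa using tendsto_succ_root.mul_const (Fintype.card X : ℝ)

theorem eventually_root_le [Fintype X] : ∀ᶠ n : ℕ in atTop,
    (gammaFn π n : ℝ) ^ (1 / (n : ℝ)) ≤ ((n : ℝ) + 1) ^ (1 / (n : ℝ)) * Fintype.card X := by
  filter_upwards [eventually_ne_atTop 0] with n hn using root_le π n hn

/-- Without this, the real `limsup` defining `gammaRate` would have a junk value. -/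
theorem isBoundedUnder_root [Fintype X] :
    IsBoundedUnder (· ≤ ·) atTop (fun n : ℕ => (gammaFn π n : ℝ) ^ (1 / (n : ℝ))) :=
  (tendsto_upper (X := X)).isBoundedUnder_le.mono_le (eventually_root_le π)

theorem isCoboundedUnder_root :
    IsCoboundedUnder (· ≤ ·) atTop (fun n : ℕ => (gammaFn π n : ℝ) ^ (1 / (n : ℝ))) :=
  isCoboundedUnder_le_of_le atTop (x := 0) fun n => by positivity

/-- Since `γ(n) ≤ (n + 1) k ^ n`. For one generator this is the sharp bound `γ ≤ 1 = √k`. -/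
theorem gammaRate_le_card [Fintype X] : gammaRate π ≤ Fintype.card X := by
  rw [← (tendsto_upper (X := X)).limsup_eq]
  exact limsup_le_limsup (eventually_root_le π) (isCoboundedUnder_root π)
    (tendsto_upper (X := X)).isBoundedUnder_le

/-- Taking `c = k ^ m` gives the bound `√k`; a larger `c` gives a strictly larger bound. -/
theorem le_gammaRate [Fintype X] {m c : ℕ} (hm : 1 ≤ m) (hc : c ≤ Nat.card (EqPairs π m)) :
    (c : ℝ) ^ (1 / ((2 * m : ℕ) : ℝ)) ≤ gammaRate π := by
  refine le_limsup_of_frequently_le ?_ (isBoundedUnder_root π)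
  rw [frequently_atTop]
  intro N
  refine ⟨2 * (m * (N + 1)), by nlinarith, ?_⟩
  have h1 : c ^ (N + 1) ≤ gammaFn π (2 * (m * (N + 1))) :=
    (Nat.pow_le_pow_left hc _).trans
      ((card_eqPairs_pow_le π m N).trans (card_eqPairs_le π _))
  have hm' : (m : ℝ) ≠ 0 := by exact_mod_cast (by omega : m ≠ 0)
  have hN : (N : ℝ) + 1 ≠ 0 := by positivity
  calc (c : ℝ) ^ (1 / ((2 * m : ℕ) : ℝ))
      = ((c : ℝ) ^ (N + 1)) ^ (1 / ((2 * (m * (N + 1)) : ℕ) : ℝ)) := by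
        rw [← Real.rpow_natCast, ← Real.rpow_mul (by positivity)]
        congr 1
        push_cast
        field_simp
    _ ≤ _ := by
        gcongr
        exact_mod_cast h1

theorem pow_root_eq_sqrt (k : ℕ) {m : ℕ} (hm : 1 ≤ m) :
    ((k ^ m : ℕ) : ℝ) ^ (1 / ((2 * m : ℕ) : ℝ)) = √k := by
  have hm' : (m : ℝ) ≠ 0 := by exact_mod_cast (by omega : m ≠ 0)
  rw [Nat.cast_pow, ← Real.rpow_natCast, ← Real.rpow_mul (by positivity), Real.sqrt_eq_rpow]
  congr 1
  push_cast
  field_simp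

theorem gammaFn_le_of_injective [Fintype X] (hinj : Function.Injective π) {m : ℕ} (hm : 1 ≤ m) :
    gammaFn π (2 * m) ≤ Fintype.card X ^ m := by
  have := finite_words (X := X) m
  rw [← card_words hm]
  refine Nat.card_le_card_of_injective (fun p : Pairs π (2 * m) => ⟨p.1.1, ?_⟩) ?_
  · have h1 := p.2.1
    rw [← hinj p.2.2] at h1
    omega
  · intro p q h
    simp only [Subtype.mk.injEq] at h
    exact Subtype.ext (Prod.ext h ((hinj p.2.2).symm.trans (h.trans (hinj q.2.2))))

theorem gammaFn_odd_of_injective (hinj : Function.Injective π) (m : ℕ) :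
    gammaFn π (2 * m + 1) = 0 := by
  have : IsEmpty (Pairs π (2 * m + 1)) := ⟨fun p => by
    have h1 := p.2.1
    rw [← hinj p.2.2] at h1
    omega⟩
  exact Nat.card_of_isEmpty

theorem gammaRate_le_of_injective [Fintype X] (hinj : Function.Injective π) :
    gammaRate π ≤ √(Fintype.card X) := by
  refine limsup_le_of_le (isCoboundedUnder_root π) ?_
  filter_upwards [eventually_ge_atTop 1] with n hn
  rcases Nat.even_or_odd' n with ⟨m, rfl | rfl⟩
  · rw [← pow_root_eq_sqrt (Fintype.card X) (m := m) (by omega)]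
    gcongr
    exact gammaFn_le_of_injective π hinj (by omega)
  · rw [gammaFn_odd_of_injective π hinj, Nat.cast_zero, Real.zero_rpow (by positivity)]
    positivity

end Cogrowth

open Cogrowth in
theorem stmt0 {X : Type} {S : Type*} [Semigroup S] [Fintype X] [Nonempty X]
    (π : FreeSemigroup X →ₙ* S) (hπ : Function.Surjective π) :
    Real.sqrt (Fintype.card X) ≤ gammaRate π ∧
      (gammaRate π = Real.sqrt (Fintype.card X) ↔
        Function.Injective π ∨ Fintype.card X = 1) := by
  have hlow : √(Fintype.card X) ≤ gammaRate π := by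
    rw [← pow_root_eq_sqrt (Fintype.card X) le_rfl]
    exact le_gammaRate π le_rfl (pow_le_card_eqPairs π le_rfl)
  refine ⟨hlow, fun heq => ?_, ?_⟩
  · by_contra! hcon
    obtain ⟨hinj, hcard⟩ := hcon
    have : Nontrivial X := by
      rw [← Fintype.one_lt_card_iff_nontrivial]
      have := Fintype.card_pos (α := X)
      omega
    obtain ⟨m, hm, hlt⟩ := exists_pow_lt_card_eqPairs π hinj
    have h1 := le_gammaRate π hm le_rfl
    rw [heq, ← pow_root_eq_sqrt (Fintype.card X) hm] at h1
    refine absurd h1 (not_le.mpr (Real.rpow_lt_rpow (by positivity) (by exact_mod_cast hlt) ?_))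
    have : 0 < 2 * m := by omega
    positivity
  · rintro (hinj | hcard)
    · exact le_antisymm (gammaRate_le_of_injective π hinj) hlow
    · refine le_antisymm ?_ hlow
      have := gammaRate_le_card π
      simpa [hcard] using this
end

section
/- Every finitely generated semigroup of subexponential growth has maximal global cogrowth: if S is a semigroup with a finite choice of generators X via π : X⁺ → S whose growth function f satisfies limsup_{n→∞} f(n)^{1/n} ≤ 1, then γ^{S,X} = |X|. -/
/-!
Write `m = |X|`. Splitting a word of length `n` in two shows `γ(n) ≤ (n + 1) mⁿ`
(`gammaFn_le`), whence `γ ≤ m`. Conversely, the `mⁿ` words of length `n` are distributed over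
`f(n)` elements of `S`, so by Cauchy–Schwarz at least `m²ⁿ / f(n)` pairs of such words agree in
`S`, i.e. `m²ⁿ ≤ f(n) γ(2n)` (`growth_mul_gamma`). As `f(n)^(1/n)` is eventually below any
constant larger than `1`, `γ(2n)^(1/2n)` is eventually above any constant smaller than `m`.
-/

open Filter

/-- The (spherical) growth function: the number of elements of `S` represented by
some word of length exactly `n`. -/
noncomputable def growthFn {X : Type} {S : Type*} [Mul S]
    (π : FreeSemigroup X →ₙ* S) (n : ℕ) : ℕ :=
  Nat.card {s : S // ∃ w : FreeSemigroup X, w.length = n ∧ π w = s}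

/-- Cauchy–Schwarz for the fibres of a map between finite types. -/
lemma card_sq_le_card_mul_card_kernel {A B : Type*} [Finite A] [Finite B] (g : A → B) :
    Nat.card A ^ 2 ≤ Nat.card B * Nat.card {p : A × A // g p.1 = g p.2} := by
  classical
  have := Fintype.ofFinite A
  have := Fintype.ofFinite B
  let e : {p : A × A // g p.1 = g p.2} ≃ Σ b : B, {a // g a = b} × {a // g a = b} :=
    { toFun := fun p => ⟨g p.1.2, ⟨p.1.1, p.2⟩, ⟨p.1.2, rfl⟩⟩
      invFun := fun q => ⟨(q.2.1.1, q.2.2.1), q.2.1.2.trans q.2.2.2.symm⟩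
      left_inv := fun p => rfl
      right_inv := by
        rintro ⟨b, ⟨a, ha⟩, ⟨a', rfl⟩⟩
        rfl }
  rw [Nat.card_congr e, ← Nat.card_congr (Equiv.sigmaFiberEquiv g)]
  simp only [Nat.card_sigma, Nat.card_prod, ← sq]
  rw [Nat.card_eq_fintype_card]
  exact sq_sum_le_card_mul_sum_sq

/-- Words of length `n + 1`, as a letter followed by a vector of length `n`. -/
def wordEquiv (X : Type) (n : ℕ) :
    {w : FreeSemigroup X // w.length = n + 1} ≃ X × List.Vector X n where
  toFun w := (w.1.head, ⟨w.1.tail, by simpa [FreeSemigroup.length] using w.2⟩)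
  invFun p := ⟨⟨p.1, p.2.1⟩, by simp [FreeSemigroup.length, p.2.2]⟩
  left_inv w := rfl
  right_inv p := rfl

lemma finite_words (X : Type) [Fintype X] (n : ℕ) :
    Finite {w : FreeSemigroup X // w.length = n + 1} :=
  Finite.of_equiv _ (wordEquiv X n).symm

lemma card_words (X : Type) [Fintype X] (n : ℕ) :
    Nat.card {w : FreeSemigroup X // w.length = n + 1} = Fintype.card X ^ (n + 1) := by
  rw [Nat.card_congr (wordEquiv X n), Nat.card_prod, Nat.card_eq_fintype_card,
    Nat.card_eq_fintype_card, card_vector, pow_succ']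

section

variable {X : Type} {S : Type*} [Semigroup S] [Fintype X] (π : FreeSemigroup X →ₙ* S)

/-- A pair of words of total length `n`, encoded as the length of the first word together with the
concatenation of the two. -/
def pairCode (n : ℕ) (p : {p : FreeSemigroup X × FreeSemigroup X //
    p.1.length + p.2.length = n ∧ π p.1 = π p.2}) : Fin (n + 1) × List.Vector X n :=
  (⟨p.1.1.length, by have := p.2.1; omega⟩,
    ⟨(p.1.1.head :: p.1.1.tail) ++ (p.1.2.head :: p.1.2.tail), by
      have := p.2.1
      simp only [FreeSemigroup.length] at this
      simp only [List.length_append, List.length_cons]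
      omega⟩)

lemma pairCode_injective (n : ℕ) : Function.Injective (pairCode π n) := by
  rintro ⟨⟨⟨a, l⟩, ⟨b, k⟩⟩, h⟩ ⟨⟨⟨a', l'⟩, ⟨b', k'⟩⟩, h'⟩ e
  have e1 := congrArg (fun c => c.1.1) e
  have e3 := congrArg (fun c => c.2.1) e
  obtain ⟨h1, h2⟩ := List.append_inj e3 (by simpa [pairCode, FreeSemigroup.length] using e1)
  simp only [List.cons.injEq] at h1 h2
  obtain ⟨rfl, rfl⟩ := h1
  obtain ⟨rfl, rfl⟩ := h2
  rfl

lemma finite_pairs (n : ℕ) : Finite {p : FreeSemigroup X × FreeSemigroup X //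
    p.1.length + p.2.length = n ∧ π p.1 = π p.2} :=
  Finite.of_injective _ (pairCode_injective π n)

lemma gammaFn_le (n : ℕ) : gammaFn π n ≤ (n + 1) * Fintype.card X ^ n := by
  refine (Nat.card_le_card_of_injective _ (pairCode_injective π n)).trans_eq ?_
  rw [Nat.card_prod, Nat.card_fin, Nat.card_eq_fintype_card, card_vector]

/-- Evaluation of words of length `n` in `S`, onto the set counted by `growthFn`. -/
def evalWord (n : ℕ) (w : {w : FreeSemigroup X // w.length = n}) :
    {s : S // ∃ w : FreeSemigroup X, w.length = n ∧ π w = s} :=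
  ⟨π w.1, w.1, w.2, rfl⟩

lemma evalWord_surjective (n : ℕ) : Function.Surjective (evalWord π n) := by
  rintro ⟨_, w, hw, rfl⟩
  exact ⟨⟨w, hw⟩, rfl⟩

lemma growthFn_le (n : ℕ) : growthFn π (n + 1) ≤ Fintype.card X ^ (n + 1) := by
  have := finite_words X n
  rw [← card_words]
  exact Nat.card_le_card_of_surjective _ (evalWord_surjective π (n + 1))

lemma growth_mul_gamma (n : ℕ) : (Fintype.card X ^ (n + 1)) ^ 2 ≤
    growthFn π (n + 1) * gammaFn π (2 * (n + 1)) := by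
  have := finite_words X n
  have := Finite.of_surjective _ (evalWord_surjective π (n + 1))
  have := finite_pairs π (2 * (n + 1))
  rw [← card_words]
  refine (card_sq_le_card_mul_card_kernel (evalWord π (n + 1))).trans ?_
  refine Nat.mul_le_mul_left _ (Nat.card_le_card_of_injective
    (fun p => ⟨(p.1.1.1, p.1.2.1), ?_, congrArg Subtype.val p.2⟩) ?_)
  · simp only [p.1.1.2, p.1.2.2]
    ring
  · rintro ⟨⟨⟨a, _⟩, ⟨b, _⟩⟩, _⟩ ⟨⟨⟨a', _⟩, ⟨b', _⟩⟩, _⟩ h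
    simpa using h

end

lemma root_le_of_le_pow {a c : ℝ} {n : ℕ} (ha : 0 ≤ a) (hc : 0 ≤ c) (hn : n ≠ 0)
    (h : a ≤ c ^ n) : a ^ (1 / (n : ℝ)) ≤ c := by
  rw [one_div]
  calc a ^ ((n : ℝ)⁻¹) ≤ (c ^ n) ^ ((n : ℝ)⁻¹) := by gcongr
    _ = c := Real.pow_rpow_inv_natCast hc hn

theorem stmt1 {X : Type} {S : Type*} [Semigroup S] [Fintype X] [Nonempty X]
    (π : FreeSemigroup X →ₙ* S) (hπ : Function.Surjective π)
    (hsub : Filter.atTop.limsup (fun n : ℕ => (growthFn π n : ℝ) ^ (1 / (n : ℝ))) ≤ 1) :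
    gammaRate π = Fintype.card X := by
  have hm : (0 : ℝ) < Fintype.card X := by exact_mod_cast Fintype.card_pos
  have hlim : Tendsto (fun n : ℕ => ((n : ℝ) + 1) ^ (1 / (n : ℝ)) * Fintype.card X) atTop
      (nhds (Fintype.card X : ℝ)) := by
    have h1 := (tendsto_rpow_div_mul_add 1 1 (-1) zero_ne_one).comp
      (tendsto_atTop_add_const_right atTop (1 : ℝ) tendsto_natCast_atTop_atTop)
    have h2 := h1.mul_const (Fintype.card X : ℝ)
    rw [one_mul] at h2
    refine h2.congr fun n => ?_
    simp
  have hle : ∀ᶠ n : ℕ in atTop, (gammaFn π n : ℝ) ^ (1 / (n : ℝ)) ≤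
      ((n : ℝ) + 1) ^ (1 / (n : ℝ)) * Fintype.card X := by
    filter_upwards [eventually_ne_atTop 0] with n hn
    refine root_le_of_le_pow (Nat.cast_nonneg _) (by positivity) hn ?_
    rw [mul_pow, one_div, Real.rpow_inv_natCast_pow (by positivity) hn]
    exact_mod_cast gammaFn_le π n
  have hcob : IsCoboundedUnder (· ≤ ·) atTop
      (fun n : ℕ => (gammaFn π n : ℝ) ^ (1 / (n : ℝ))) :=
    IsBoundedUnder.isCoboundedUnder_le
      (isBoundedUnder_of ⟨0, fun n => Real.rpow_nonneg (Nat.cast_nonneg _) _⟩)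
  have hbdd : IsBoundedUnder (· ≤ ·) atTop
      (fun n : ℕ => (gammaFn π n : ℝ) ^ (1 / (n : ℝ))) :=
    hlim.isBoundedUnder_le.mono_le hle
  have hfbdd : IsBoundedUnder (· ≤ ·) atTop
      (fun n : ℕ => (growthFn π n : ℝ) ^ (1 / (n : ℝ))) := by
    refine ⟨Fintype.card X, ?_⟩
    rw [eventually_map]
    filter_upwards [eventually_ne_atTop 0] with n hn
    refine root_le_of_le_pow (Nat.cast_nonneg _) hm.le hn ?_
    obtain ⟨k, rfl⟩ := Nat.exists_eq_succ_of_ne_zero hn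
    exact_mod_cast growthFn_le π k
  apply le_antisymm
  · exact (limsup_le_limsup hle hcob hlim.isBoundedUnder_le).trans_eq hlim.limsup_eq
  · refine le_of_forall_lt fun c hc => ?_
    -- An intermediate `d` with `c < d < m`, positive so that `m / d > 1` makes sense.
    obtain ⟨d, hd, hdm⟩ := exists_between (max_lt hc hm)
    obtain ⟨hcd, hd0⟩ := max_lt_iff.1 hd
    have hr : 1 < Fintype.card X / d := (one_lt_div hd0).2 hdm
    have hev := eventually_lt_of_limsup_lt (hsub.trans_lt hr) hfbdd
    refine hcd.trans_le (le_limsup_of_frequently_le ?_ hbdd)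
    -- `d ≤ γ(2n)^(1/2n)` for every large `n`.
    have key : ∀ᶠ n : ℕ in atTop,
        d ≤ (gammaFn π (2 * n) : ℝ) ^ (1 / ((2 * n : ℕ) : ℝ)) := by
      filter_upwards [hev, eventually_ne_atTop 0] with n h hn
      have hf : (growthFn π n : ℝ) ≤ (Fintype.card X / d) ^ n := by
        have := pow_le_pow_left₀ (Real.rpow_nonneg (Nat.cast_nonneg _) _) h.le n
        rwa [one_div, Real.rpow_inv_natCast_pow (Nat.cast_nonneg _) hn] at this
      have hg : ((Fintype.card X : ℝ) ^ n) ^ 2 ≤ growthFn π n * gammaFn π (2 * n) := by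
        obtain ⟨k, rfl⟩ := Nat.exists_eq_succ_of_ne_zero hn
        exact_mod_cast growth_mul_gamma π k
      have hpow : d ^ (2 * n) ≤ gammaFn π (2 * n) := by
        have h1 := hg.trans (mul_le_mul_of_nonneg_right hf (Nat.cast_nonneg _))
        have hmn : (0 : ℝ) < (Fintype.card X : ℝ) ^ n := by positivity
        have hdn : (0 : ℝ) < d ^ n := by positivity
        rw [div_pow, div_mul_eq_mul_div, le_div_iff₀ hdn, sq, mul_assoc,
          mul_le_mul_iff_right₀ hmn] at h1
        calc d ^ (2 * n) = d ^ n * d ^ n := by rw [two_mul, pow_add]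
          _ ≤ (Fintype.card X : ℝ) ^ n * d ^ n := by gcongr
          _ ≤ _ := h1
      calc d = (d ^ (2 * n)) ^ (((2 * n : ℕ) : ℝ)⁻¹) :=
            (Real.pow_rpow_inv_natCast hd0.le (by omega)).symm
        _ ≤ (gammaFn π (2 * n) : ℝ) ^ (((2 * n : ℕ) : ℝ)⁻¹) := by gcongr
        _ = _ := by rw [one_div]
    exact (tendsto_id.const_mul_atTop' two_pos).frequently key.frequently
end

section
/- Suppose the semigroup S has maximal global cogrowth with respect to some finite choice of generators X via π : X⁺ → S (i.e. γ^{S,X} = |X|), and let K be any finite subset of S¹ = WithOne S. Then there exist a finite nonempty set Z and a surjective semigroup homomorphism ρ : Z⁺ → S¹ such that every element of K is represented by some generator (for every k ∈ K there is z ∈ Z with ρ(z) = k) and S¹ has maximal global cogrowth with respect to Z (γ^{S¹,Z} = |Z|). -/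
/-!
Everything is phrased through `cnt φ a b`, the number of pairs of words of lengths `a` and `b` with
the same value, where `φ : X → M` gives the values of the letters in a monoid. Concatenating pairs
shows `cnt φ a b * cnt φ a' b' ≤ cnt φ (a + a') (b + b')` (`cnt_mul_le`). Since a total length `n`
splits in fewer than `n` ways and `cnt φ a b ≤ |X| ^ (a + b)`, the cogrowth rate is `|X|` exactly
when, for each `r < |X|`, some `a, b > 0` satisfy `r ^ (a + b) ≤ cnt φ a b`. This is the predicate
`Maximal`; the two directions are `maximal_of_gammaRate` and `gammaRate_of_maximal`.

Two changes of generators preserve `Maximal`.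

* Adjoining a letter of value `1` (`Maximal.addOne`). Padding gives
  `A.choose a * B.choose b * cnt φ a b ≤ cnt (addOne φ) A B`. With `d = |X|` and `a : A` and `b : B`
  both equal to `d : d + 1`, each binomial coefficient belongs to the largest term in the expansion
  of `(d + 1) ^ A`, resp. `(d + 1) ^ B`, so nothing exponential is lost.
* Replacing letters by words of a fixed length `m` (`Maximal.block`), because
  `cnt φ a b ^ m ≤ cnt φ (m * a) (m * b) ≤ cnt (block φ m) a b`.

Applied in this order to `X → S¹`, with `m` large, the two changes produce as generators all words
of length `m` over `X ∪ {1}`. By padding with `1` these represent every element of `K`.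
-/

open Filter

namespace Cogrowth

/-! ### Counting pairs of equal words -/

section Words

variable {X M : Type*} [Monoid M]

/-- The value in `M` of a word in the letters `X`, where `φ` gives the value of each letter. -/
def ev (φ : X → M) (l : List X) : M := (l.map φ).prod

@[simp] lemma ev_nil (φ : X → M) : ev φ [] = 1 := rfl

@[simp] lemma ev_cons (φ : X → M) (x : X) (l : List X) : ev φ (x :: l) = φ x * ev φ l := by
  simp [ev]

@[simp] lemma ev_append (φ : X → M) (l l' : List X) :
    ev φ (l ++ l') = ev φ l * ev φ l' := by
  simp [ev]

/-- Pairs of words of lengths `a` and `b` with the same value. -/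
def pairs (φ : X → M) (a b : ℕ) : Set (List X × List X) :=
  {p | p.1.length = a ∧ p.2.length = b ∧ ev φ p.1 = ev φ p.2}

/-- The number of pairs of words of lengths `a` and `b` with the same value. -/
noncomputable def cnt (φ : X → M) (a b : ℕ) : ℕ := (pairs φ a b).ncard

lemma pairs_subset (φ : X → M) (a b : ℕ) :
    pairs φ a b ⊆ {l : List X | l.length = a} ×ˢ {l : List X | l.length = b} :=
  fun _ hp => ⟨hp.1, hp.2.1⟩

variable [Finite X]

lemma pairs_finite (φ : X → M) (a b : ℕ) : (pairs φ a b).Finite :=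
  ((List.finite_length_eq X a).prod (List.finite_length_eq X b)).subset (pairs_subset φ a b)

lemma cnt_le (φ : X → M) (a b : ℕ) : cnt φ a b ≤ Nat.card X ^ (a + b) := by
  have key : ∀ n, {l : List X | l.length = n}.ncard = Nat.card X ^ n := fun n => by
    have := Fintype.ofFinite X
    rw [← Nat.card_coe_set_eq]
    change Nat.card (List.Vector X n) = _
    simp
  refine (Set.ncard_le_ncard (pairs_subset φ a b)
    ((List.finite_length_eq X a).prod (List.finite_length_eq X b))).trans ?_
  rw [Set.ncard_prod, key, key, pow_add]

lemma cnt_mul_le (φ : X → M) (a b a' b' : ℕ) :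
    cnt φ a b * cnt φ a' b' ≤ cnt φ (a + a') (b + b') := by
  unfold cnt
  rw [← Set.ncard_prod]
  refine Set.ncard_le_ncard_of_injOn (fun q => (q.1.1 ++ q.2.1, q.1.2 ++ q.2.2)) ?_ ?_
    (pairs_finite φ _ _)
  · rintro ⟨⟨u, v⟩, ⟨u', v'⟩⟩ ⟨⟨h1, h2, h3⟩, ⟨h4, h5, h6⟩⟩
    simp only at h1 h2 h3 h4 h5 h6
    exact ⟨by simp [h1, h4], by simp [h2, h5], by simp [h3, h6]⟩
  · rintro ⟨⟨u, v⟩, ⟨u', v'⟩⟩ ⟨⟨h1, h2, h3⟩, _⟩ ⟨⟨w, z⟩, ⟨w', z'⟩⟩ ⟨⟨k1, k2, k3⟩, _⟩ h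
    simp only [Prod.mk.injEq] at h1 h2 k1 k2 h ⊢
    obtain ⟨e1, e2⟩ := List.append_inj h.1 (h1.trans k1.symm)
    obtain ⟨e3, e4⟩ := List.append_inj h.2 (h2.trans k2.symm)
    exact ⟨⟨e1, e3⟩, e2, e4⟩

lemma cnt_pow_le (φ : X → M) (a b k : ℕ) : cnt φ a b ^ k ≤ cnt φ (k * a) (k * b) := by
  induction k with
  | zero =>
    have : pairs φ (0 * a) (0 * b) = {([], [])} := by
      ext ⟨u, v⟩
      simp only [pairs, zero_mul, List.length_eq_zero_iff, Set.mem_ofPred_eq,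
        Set.mem_singleton_iff, Prod.mk.injEq]
      constructor
      · exact fun h => ⟨h.1, h.2.1⟩
      · rintro ⟨rfl, rfl⟩; simp
    rw [pow_zero, cnt, this, Set.ncard_singleton]
  | succ k ih =>
    rw [pow_succ, add_mul, add_mul, one_mul, one_mul]
    exact (Nat.mul_le_mul_right _ ih).trans (cnt_mul_le φ _ _ _ _)

/-- A reformulation of maximal cogrowth: for every `r < |X|` there are positive lengths `a`, `b`
for which at least `r ^ (a + b)` pairs of words of these lengths have the same value. -/
def Maximal (φ : X → M) : Prop :=
  ∀ r : ℝ, 0 < r → r < Nat.card X → ∃ a b : ℕ, 0 < a ∧ 0 < b ∧ r ^ (a + b) ≤ cnt φ a b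

end Words

/-! ### Comparison with the global cogrowth rate -/

section Rate

variable {X : Type} {S M : Type*} [Mul S] [Monoid M]

/-- The nonempty list of letters of an element of the free semigroup. -/
def toL (w : FreeSemigroup X) : List X := w.head :: w.tail

lemma toL_injective : Function.Injective (toL : FreeSemigroup X → List X) := by
  intro u v h
  simp only [toL, List.cons.injEq] at h
  exact FreeSemigroup.ext h.1 h.2

lemma ev_toL (π : FreeSemigroup X →ₙ* S) (h : S →ₙ* M) (w : FreeSemigroup X) :
    ev (fun x => h (π (.of x))) (toL w) = h (π w) := by
  induction w with
  | ih1 x => simp [toL]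
  | ih2 x y _ hy =>
    have : toL (FreeSemigroup.of x * y) = x :: toL y := rfl
    rw [this, ev_cons, hy, map_mul, map_mul]

/-- Pairs of nonempty words of total length `n` with the same value. -/
def npairs (φ : X → M) (n : ℕ) : Set (List X × List X) :=
  {p | p.1 ≠ [] ∧ p.2 ≠ [] ∧ p.1.length + p.2.length = n ∧ ev φ p.1 = ev φ p.2}

lemma gammaFn_eq (π : FreeSemigroup X →ₙ* S) (h : S →ₙ* M) (hh : Function.Injective h) (n : ℕ) :
    gammaFn π n = (npairs (fun x => h (π (.of x))) n).ncard := by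
  have : npairs (fun x => h (π (.of x))) n = Prod.map toL toL ''
      {p : FreeSemigroup X × FreeSemigroup X |
        p.1.length + p.2.length = n ∧ π p.1 = π p.2} := by
    ext ⟨u, v⟩
    constructor
    · rintro ⟨h1, h2, h3, h4⟩
      obtain ⟨x, u, rfl⟩ := List.exists_cons_of_ne_nil h1
      obtain ⟨y, v, rfl⟩ := List.exists_cons_of_ne_nil h2
      exact ⟨(⟨x, u⟩, ⟨y, v⟩), ⟨h3, hh (by rw [← ev_toL, ← ev_toL]; exact h4)⟩, rfl⟩
    · rintro ⟨⟨p, q⟩, ⟨h1, h2⟩, h3⟩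
      cases h3
      refine ⟨by simp [toL], by simp [toL], h1, ?_⟩
      simp only at h2 ⊢
      rw [ev_toL, ev_toL, h2]
  rw [this, Set.ncard_image_of_injective _ (toL_injective.prodMap toL_injective)]
  rfl

variable [Finite X]

lemma npairs_finite (φ : X → M) (n : ℕ) : (npairs φ n).Finite := by
  refine ((List.finite_length_le X n).prod (List.finite_length_le X n)).subset ?_
  rintro ⟨u, v⟩ ⟨_, _, h, _⟩
  simp only at h
  exact ⟨by simp; omega, by simp; omega⟩

lemma cnt_le_npairs (φ : X → M) {a b : ℕ} (ha : 0 < a) (hb : 0 < b) :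
    cnt φ a b ≤ (npairs φ (a + b)).ncard := by
  refine Set.ncard_le_ncard ?_ (npairs_finite φ _)
  rintro ⟨u, v⟩ ⟨h1, h2, h3⟩
  simp only at h1 h2 h3
  refine ⟨?_, ?_, by simp [h1, h2], h3⟩
  · rintro rfl; simp at h1; omega
  · rintro rfl; simp at h2; omega

open Classical in
lemma fiber_card_le (φ : X → M) {n a : ℕ} :
    ((npairs_finite φ n).toFinset.filter (fun p => p.1.length = a)).card ≤ cnt φ a (n - a) := by
  rw [← Set.ncard_coe_finset]
  refine Set.ncard_le_ncard ?_ (pairs_finite φ _ _)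
  rintro ⟨u, v⟩ h
  simp only [Finset.coe_filter, Set.Finite.mem_toFinset, Set.mem_ofPred_eq, npairs] at h
  exact ⟨h.2, by simp; omega, h.1.2.2.2⟩

lemma fiber_maps (φ : X → M) {n : ℕ} :
    ∀ p ∈ (npairs_finite φ n).toFinset, p.1.length ∈ Finset.Ico 1 n := by
  rintro ⟨u, v⟩ h
  simp only [Set.Finite.mem_toFinset, npairs, Set.mem_ofPred_eq] at h
  have h1 := List.length_pos_iff.2 h.1
  have h2 := List.length_pos_iff.2 h.2.1
  simp; omega

lemma npairs_le (φ : X → M) (n : ℕ) : (npairs φ n).ncard ≤ n * Nat.card X ^ n := by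
  classical
  rw [Set.ncard_eq_toFinset_card _ (npairs_finite φ n)]
  have := Finset.card_le_mul_card_image_of_maps_to (fiber_maps φ (n := n)) (Nat.card X ^ n) ?_
  · refine this.trans ?_
    rw [mul_comm]
    exact Nat.mul_le_mul_right _ (by simp)
  · intro a ha
    refine (fiber_card_le φ).trans ((cnt_le φ _ _).trans ?_)
    rw [Finset.mem_Ico] at ha
    rw [Nat.add_sub_cancel' ha.2.le]

/-- If there are at least `n * t` pairs of total length `n`, then by the pigeonhole principle one
of the splittings `n = a + b` carries at least `t` of them. -/
lemma exists_le_cnt (φ : X → M) {n : ℕ} (hn : 2 ≤ n) {t : ℝ} (ht : 0 ≤ t)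
    (h : n * t ≤ (npairs φ n).ncard) :
    ∃ a b : ℕ, 0 < a ∧ 0 < b ∧ a + b = n ∧ t ≤ cnt φ a b := by
  classical
  rw [Set.ncard_eq_toFinset_card _ (npairs_finite φ n)] at h
  obtain ⟨a, ha, h⟩ := Finset.exists_le_card_fiber_of_nsmul_le_card_of_maps_to
    (fiber_maps φ (n := n)) (by simp; omega) (b := t) (by
      refine le_trans ?_ h
      rw [nsmul_eq_mul]
      gcongr
      simp)
  rw [Finset.mem_Ico] at ha
  exact ⟨a, n - a, by omega, by omega, by omega, h.trans (by exact_mod_cast fiber_card_le φ)⟩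

lemma eventually_mul_pow_le {r s : ℝ} (hr : 0 < r) (hrs : r < s) (k : ℕ) :
    ∀ᶠ n : ℕ in atTop, (n : ℝ) ^ k * r ^ n ≤ s ^ n := by
  have hs : 0 < s := hr.trans hrs
  have h1 : |r / s| < 1 := by
    rw [abs_of_pos (by positivity)]
    exact (div_lt_one hs).2 hrs
  have := (tendsto_pow_const_mul_const_pow_of_abs_lt_one k h1).eventually_le_const zero_lt_one
  filter_upwards [this] with n hn
  rwa [div_pow, ← mul_div_assoc, div_le_one (by positivity)] at hn

lemma maximal_of_gammaRate (π : FreeSemigroup X →ₙ* S) (h : S →ₙ* M)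
    (hh : Function.Injective h) (hmax : gammaRate π = Nat.card X) :
    Maximal (fun x => h (π (.of x))) := by
  intro r hr hrd
  obtain ⟨s, hrs, hsd⟩ := exists_between hrd
  have hs : 0 < s := hr.trans hrs
  rw [← hmax] at hsd
  have hf := frequently_lt_of_lt_limsup
    (isCoboundedUnder_le_of_le atTop (x := 0) (fun n => by positivity)) hsd
  obtain ⟨n, hn, hn2, hnr⟩ := (hf.and_eventually
    ((eventually_ge_atTop 2).and (eventually_mul_pow_le hr hrs 1))).exists
  have hsn : s ^ n ≤ (npairs (fun x => h (π (.of x))) n).ncard := by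
    rw [← gammaFn_eq π h hh]
    have := pow_le_pow_left₀ hs.le hn.le n
    rwa [one_div, Real.rpow_inv_natCast_pow (by positivity) (by omega)] at this
  rw [pow_one] at hnr
  obtain ⟨a, b, ha, hb, rfl, hab⟩ := exists_le_cnt _ hn2 (by positivity) (hnr.trans hsn)
  exact ⟨a, b, ha, hb, hab⟩

lemma gammaRate_of_maximal [Nonempty X] (π : FreeSemigroup X →ₙ* S) (h : S →ₙ* M)
    (hh : Function.Injective h) (hmax : Maximal (fun x => h (π (.of x)))) :
    gammaRate π = Nat.card X := by
  have hd : 0 < (Nat.card X : ℝ) := by exact_mod_cast Nat.card_pos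
  have hlim : Tendsto (fun n : ℕ => (n : ℝ) ^ (1 / (n : ℝ)) * Nat.card X) atTop
      (nhds (Nat.card X : ℝ)) := by
    have := (tendsto_rpow_div.comp tendsto_natCast_atTop_atTop).mul_const (Nat.card X : ℝ)
    rwa [one_mul] at this
  have hle : (fun n : ℕ => (gammaFn π n : ℝ) ^ (1 / (n : ℝ))) ≤ᶠ[atTop]
      fun n : ℕ => (n : ℝ) ^ (1 / (n : ℝ)) * Nat.card X := by
    filter_upwards [eventually_gt_atTop 0] with n hn
    have h1 : (gammaFn π n : ℝ) ≤ n * (Nat.card X : ℝ) ^ n := by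
      rw [gammaFn_eq π h hh]
      exact_mod_cast npairs_le _ n
    calc (gammaFn π n : ℝ) ^ (1 / (n : ℝ)) ≤ (n * (Nat.card X : ℝ) ^ n) ^ (1 / (n : ℝ)) := by
          gcongr
      _ = _ := by
          rw [Real.mul_rpow (by positivity) (by positivity)]
          congr 1
          rw [one_div, Real.pow_rpow_inv_natCast hd.le (by omega)]
  have hbdd : IsBoundedUnder (· ≤ ·) atTop (fun n : ℕ => (gammaFn π n : ℝ) ^ (1 / (n : ℝ))) :=
    hlim.isBoundedUnder_le.mono_le hle
  apply le_antisymm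
  · rw [← hlim.limsup_eq]
    exact limsup_le_limsup hle (isCoboundedUnder_le_of_le atTop (x := 0) (fun n => by positivity))
      hlim.isBoundedUnder_le
  · refine le_of_forall_lt_imp_le_of_dense fun r hr => ?_
    -- Negative `r` are covered by replacing `r` with a positive number between `r` and `|X|`.
    obtain ⟨s, hs, hsd⟩ := exists_between (max_lt hr hd)
    rw [max_lt_iff] at hs
    obtain ⟨a, b, ha, hb, hab⟩ := hmax s hs.2 hsd
    refine hs.1.le.trans (le_limsup_of_frequently_le ?_ hbdd)
    rw [frequently_atTop]
    intro k
    refine ⟨(k + 1) * a + (k + 1) * b, by nlinarith, ?_⟩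
    rw [gammaFn_eq π h hh, one_div]
    have hn : 0 < (k + 1) * a + (k + 1) * b := by positivity
    rw [← Real.pow_rpow_inv_natCast hs.2.le hn.ne']
    refine Real.rpow_le_rpow (pow_nonneg hs.2.le _) ?_ (by positivity)
    have h1 : ((cnt (fun x => h (π (.of x))) a b : ℕ) : ℝ) ^ (k + 1) ≤
        (npairs (fun x => h (π (.of x))) ((k + 1) * a + (k + 1) * b)).ncard := by
      exact_mod_cast (cnt_pow_le _ a b (k + 1)).trans
        (cnt_le_npairs _ (by positivity) (by positivity))
    refine le_trans ?_ h1
    rw [← mul_add, mul_comm, pow_mul]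
    have := hs.2
    gcongr

end Rate

/-! ### Adjoining a letter of value one -/

section AddOne

/-- Among the terms of the binomial expansion of `(1 + d) ^ ((d + 1) * t)`, the one of index
`d * t` is the largest. -/
lemma choose_mul_pow_le (d t i : ℕ) :
    ((d + 1) * t).choose i * d ^ i ≤ ((d + 1) * t).choose (d * t) * d ^ (d * t) := by
  set N := (d + 1) * t with hN
  have step : ∀ j, N.choose (j + 1) * d ^ (j + 1) * (j + 1) = N.choose j * d ^ j * (d * (N - j)) :=
    fun j => by
      have := Nat.choose_succ_right_eq N j
      calc _ = (N.choose (j + 1) * (j + 1)) * d ^ (j + 1) := by ring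
        _ = _ := by rw [this]; ring
  have hNt : N = d * t + t := by rw [hN]; ring
  rcases le_total i (d * t) with h | h
  · induction h using Nat.decreasingInduction with
    | self => exact le_rfl
    | of_succ j hj ih =>
      refine le_trans (Nat.le_of_mul_le_mul_right (c := j + 1) ?_ j.succ_pos) ih
      rw [step]
      gcongr
      calc j + 1 ≤ d * t := hj
        _ ≤ d * (N - j) := by gcongr; omega
  · induction i, h using Nat.le_induction with
    | base => exact le_rfl
    | succ j hj ih =>
      refine le_trans (Nat.le_of_mul_le_mul_right (c := j + 1) ?_ j.succ_pos) ih
      rw [step]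
      gcongr
      calc d * (N - j) ≤ d * t := by gcongr; omega
        _ ≤ j + 1 := by omega

lemma le_choose (d t : ℕ) :
    (d + 1) ^ ((d + 1) * t) ≤
      ((d + 1) * t + 1) * (((d + 1) * t).choose (d * t) * d ^ (d * t)) := by
  rw [add_pow]
  refine (Finset.sum_le_card_nsmul _ _ (((d + 1) * t).choose (d * t) * d ^ (d * t)) ?_).trans ?_
  · intro i _
    rw [one_pow, mul_one, mul_comm]
    exact choose_mul_pow_le d t i
  · simp

variable {X M : Type*} [Monoid M]

/-- Adjoining to the letters of `φ` a letter `none` of value `1`. -/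
def addOne (φ : X → M) (o : Option X) : M := o.elim 1 φ

lemma ev_addOne (φ : X → M) (l : List (Option X)) :
    ev (addOne φ) l = ev φ l.reduceOption := by
  induction l with
  | nil => rfl
  | cons o l ih => cases o <;> simp [addOne, ih]

/-- A word `u` can be padded to length `n` by letters `none` in `n.choose u.length` ways. -/
lemma exists_paddings (n : ℕ) (u : List X) : ∃ s : Finset (List (Option X)),
    s.card = n.choose u.length ∧ ∀ w ∈ s, w.length = n ∧ w.reduceOption = u := by
  classical
  induction n generalizing u with
  | zero =>
    cases u with
    | nil => exact ⟨{[]}, by simp⟩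
    | cons x u => exact ⟨∅, by simp⟩
  | succ n ih =>
    cases u with
    | nil => exact ⟨{List.replicate (n + 1) none}, by simp⟩
    | cons x u =>
      obtain ⟨s, hs, hs'⟩ := ih u
      obtain ⟨t, ht, ht'⟩ := ih (x :: u)
      refine ⟨s.image (some x :: ·) ∪ t.image (none :: ·), ?_, ?_⟩
      · rw [Finset.card_union_of_disjoint, Finset.card_image_of_injective _ (List.cons_injective),
          Finset.card_image_of_injective _ (List.cons_injective), hs, ht, List.length_cons,
          Nat.choose_succ_succ]
        rw [Finset.disjoint_left]
        simp
      · intro w hw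
        simp only [Finset.mem_union, Finset.mem_image] at hw
        rcases hw with ⟨v, hv, rfl⟩ | ⟨v, hv, rfl⟩
        · simp [hs' v hv]
        · simp [ht' v hv]

variable [Finite X]

lemma choose_mul_cnt_le (φ : X → M) (A B a b : ℕ) :
    A.choose a * B.choose b * cnt φ a b ≤ cnt (addOne φ) A B := by
  classical
  choose s hs hs' using fun n => exists_paddings (X := X) n
  unfold cnt
  rw [Set.ncard_eq_toFinset_card _ (pairs_finite φ a b),
    Set.ncard_eq_toFinset_card _ (pairs_finite (addOne φ) A B)]
  have hcard : ((pairs_finite φ a b).toFinset.biUnion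
      fun p => s A p.1 ×ˢ s B p.2).card =
      A.choose a * B.choose b * (pairs_finite φ a b).toFinset.card := by
    rw [Finset.card_biUnion, Finset.sum_const_nat, mul_comm]
    · intro p hp
      rw [Set.Finite.mem_toFinset] at hp
      rw [Finset.card_product, hs, hs, hp.1, hp.2.1]
    · intro p _ q _ hpq
      simp only [Function.onFun]
      rw [Finset.disjoint_left]
      rintro ⟨u, v⟩ h1 h2
      rw [Finset.mem_product] at h1 h2
      apply hpq
      ext1
      · rw [← (hs' _ _ _ h1.1).2, (hs' _ _ _ h2.1).2]
      · rw [← (hs' _ _ _ h1.2).2, (hs' _ _ _ h2.2).2]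
  rw [← hcard]
  apply Finset.card_le_card
  rintro ⟨u, v⟩ h
  simp only [Finset.mem_biUnion, Set.Finite.mem_toFinset, Finset.mem_product] at h ⊢
  obtain ⟨p, hp, h1, h2⟩ := h
  refine ⟨(hs' _ _ _ h1).1, (hs' _ _ _ h2).1, ?_⟩
  simp only
  rw [ev_addOne, ev_addOne, (hs' _ _ _ h1).2, (hs' _ _ _ h2).2, hp.2.2]

lemma Maximal.addOne [Nonempty X] {φ : X → M} (h : Maximal φ) : Maximal (addOne φ) := by
  intro r hr hrd
  set d := Nat.card X with hd
  have hd0 : 0 < d := Nat.card_pos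
  have hd0' : (0 : ℝ) < d := by exact_mod_cast hd0
  rw [Finite.card_option, ← hd] at hrd
  push_cast at hrd
  -- `s < d` is chosen so that `(d + 1) * s / d` still exceeds `r`.
  obtain ⟨s, hs, hsd⟩ := exists_between (show r * d / (d + 1) < d by
    rw [div_lt_iff₀ (by positivity)]; nlinarith)
  have hs0 : 0 < s := lt_of_le_of_lt (by positivity) hs
  have hq : r < (d + 1) * (s / d) := by
    rw [div_lt_iff₀ (by positivity)] at hs
    rw [← mul_div_assoc, lt_div_iff₀ hd0']; linarith
  obtain ⟨a, b, ha, hb, hab⟩ := h s hs0 hsd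
  obtain ⟨T, hT⟩ := eventually_atTop.1 (eventually_mul_pow_le hr hq 2)
  set t := T + 1
  set A := (d + 1) * (t * a) with hA
  set B := (d + 1) * (t * b) with hB
  have hA0 : 0 < A := by positivity
  have hB0 : 0 < B := by positivity
  have hAB : (A + B : ℕ) = (d + 1) * t * (a + b) := by rw [hA, hB]; ring
  refine ⟨A, B, hA0, hB0, ?_⟩
  have hc : (A.choose (d * (t * a)) * B.choose (d * (t * b)) * cnt φ a b ^ (d * t) : ℝ) ≤
      cnt (Cogrowth.addOne φ) A B := by
    have h1 := cnt_pow_le φ a b (d * t)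
    have h2 := choose_mul_cnt_le φ A B (d * (t * a)) (d * (t * b))
    rw [mul_assoc, mul_assoc] at h1
    exact_mod_cast (Nat.mul_le_mul_left _ h1).trans h2
  have hCA : ((d : ℝ) + 1) ^ A ≤ (A + 1) * (A.choose (d * (t * a)) * d ^ (d * (t * a))) := by
    exact_mod_cast le_choose d (t * a)
  have hCB : ((d : ℝ) + 1) ^ B ≤ (B + 1) * (B.choose (d * (t * b)) * d ^ (d * (t * b))) := by
    exact_mod_cast le_choose d (t * b)
  have hsd' : (s / d) ^ (A + B) ≤ (s / d) ^ (d * t * (a + b)) := by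
    apply pow_le_pow_of_le_one (by positivity) ((div_le_one hd0').2 hsd.le)
    rw [hAB]
    gcongr
    omega
  have hcs : s ^ (d * t * (a + b)) ≤ (cnt φ a b : ℝ) ^ (d * t) := by
    rw [mul_comm, pow_mul]
    gcongr
  have hTN : ((A + B : ℕ) : ℝ) ^ 2 * r ^ (A + B) ≤ ((d + 1) * (s / d)) ^ (A + B) := by
    apply hT
    rw [hAB]
    calc T ≤ 1 * t * 1 := by omega
      _ ≤ (d + 1) * t * (a + b) := by gcongr <;> omega
  have hpoly : ((A : ℝ) + 1) * (B + 1) ≤ ((A + B : ℕ) : ℝ) ^ 2 := by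
    have h1 : (1 : ℝ) ≤ A := by exact_mod_cast hA0
    have h2 : (1 : ℝ) ≤ B := by exact_mod_cast hB0
    push_cast
    nlinarith
  refine le_trans ?_ hc
  refine le_of_mul_le_mul_left ?_ (show (0 : ℝ) < (A + 1) * (B + 1) by positivity)
  calc ((A : ℝ) + 1) * (B + 1) * r ^ (A + B)
      ≤ ((A + B : ℕ) : ℝ) ^ 2 * r ^ (A + B) := by gcongr
    _ ≤ ((d + 1) * (s / d)) ^ (A + B) := hTN
    _ = (d + 1) ^ A * (d + 1) ^ B * (s / d) ^ (A + B) := by rw [mul_pow, pow_add]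
    _ ≤ ((A + 1) * (A.choose (d * (t * a)) * d ^ (d * (t * a)))) *
        ((B + 1) * (B.choose (d * (t * b)) * d ^ (d * (t * b)))) *
        (s / d) ^ (d * t * (a + b)) := by gcongr
    _ = (A + 1) * (B + 1) * (A.choose (d * (t * a)) * B.choose (d * (t * b)) *
        s ^ (d * t * (a + b))) := by
      rw [div_pow, show d * t * (a + b) = d * (t * a) + d * (t * b) by ring,
        pow_add (d : ℝ)]
      field_simp
    _ ≤ _ := by gcongr

end AddOne

/-! ### Passing to blocks of letters -/

section Blocks

variable {X M : Type*} [Monoid M]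

/-- The generating map whose letters are the words of length `m` over the letters of `φ`. -/
def block (φ : X → M) (m : ℕ) (v : List.Vector X m) : M := ev φ v.toList

lemma ev_block (φ : X → M) (m : ℕ) (l : List (List.Vector X m)) :
    ev (block φ m) l = ev φ (l.flatMap List.Vector.toList) := by
  induction l with
  | nil => rfl
  | cons v l ih => simp [block, ih]

lemma exists_blocks (m a : ℕ) (l : List X) (hl : l.length = m * a) :
    ∃ L : List (List.Vector X m), L.length = a ∧ L.flatMap List.Vector.toList = l := by
  induction a generalizing l with
  | zero =>
    refine ⟨[], rfl, ?_⟩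
    simpa [eq_comm] using hl
  | succ a ih =>
    rw [mul_add, mul_one] at hl
    obtain ⟨L, hL, hL'⟩ := ih (l.drop m) (by rw [List.length_drop]; omega)
    obtain ⟨v, hv⟩ : ∃ v : List.Vector X m, v.toList = l.take m :=
      ⟨⟨l.take m, by rw [List.length_take]; omega⟩, rfl⟩
    refine ⟨v :: L, by simp [hL], ?_⟩
    rw [List.flatMap_cons, hL', hv]
    exact List.take_append_drop m l

variable [Finite X]

lemma cnt_le_cnt_block (φ : X → M) (m a b : ℕ) :
    cnt φ (m * a) (m * b) ≤ cnt (block φ m) a b := by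
  have hsub : pairs φ (m * a) (m * b) ⊆ (Prod.map (List.flatMap List.Vector.toList)
      (List.flatMap List.Vector.toList)) '' pairs (block φ m) a b := by
    rintro ⟨u, v⟩ ⟨h1, h2, h3⟩
    obtain ⟨U, hU, rfl⟩ := exists_blocks m a u h1
    obtain ⟨V, hV, rfl⟩ := exists_blocks m b v h2
    exact ⟨(U, V), ⟨hU, hV, by rw [ev_block, ev_block]; exact h3⟩, rfl⟩
  exact (Set.ncard_le_ncard hsub ((pairs_finite _ _ _).image _)).trans
    (Set.ncard_image_le (pairs_finite _ _ _))

lemma Maximal.block {φ : X → M} (h : Maximal φ) {m : ℕ} (hm : 0 < m) :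
    Maximal (block φ m) := by
  have := Fintype.ofFinite X
  intro r hr hrd
  rw [Nat.card_eq_fintype_card, card_vector, ← Nat.card_eq_fintype_card] at hrd
  push_cast at hrd
  have hpow : (r ^ (m : ℝ)⁻¹) ^ m = r := Real.rpow_inv_natCast_pow hr.le hm.ne'
  obtain ⟨a, b, ha, hb, hab⟩ := h (r ^ (m : ℝ)⁻¹) (by positivity)
    (lt_of_pow_lt_pow_left₀ m (by positivity) (by rwa [hpow]))
  refine ⟨a, b, ha, hb, ?_⟩
  calc r ^ (a + b) = ((r ^ (m : ℝ)⁻¹) ^ (a + b)) ^ m := by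
        rw [← pow_mul, mul_comm, pow_mul, hpow]
    _ ≤ (cnt φ a b : ℝ) ^ m := by gcongr
    _ ≤ cnt (Cogrowth.block φ m) a b := by
        exact_mod_cast (cnt_pow_le φ a b m).trans (cnt_le_cnt_block φ m a b)

end Blocks

/-- Every element of `S¹` is the value of a word over `X` and the additional letter `none`, of any
sufficiently large length. -/
lemma exists_word {X : Type} {S : Type*} [Semigroup S] (π : FreeSemigroup X →ₙ* S)
    (hπ : Function.Surjective π) (s : WithOne S) : ∃ N, ∀ n, N ≤ n →
    ∃ l : List (Option X), l.length = n ∧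
      ev (addOne fun x => WithOne.coeMulHom (π (.of x))) l = s := by
  obtain ⟨u, hu⟩ : ∃ u : List X, ev (fun x => WithOne.coeMulHom (π (.of x))) u = s := by
    refine WithOne.cases_on s ⟨[], rfl⟩ fun s => ?_
    obtain ⟨w, rfl⟩ := hπ s
    exact ⟨toL w, ev_toL π WithOne.coeMulHom w⟩
  refine ⟨u.length, fun n hn => ?_⟩
  obtain ⟨t, ht, ht'⟩ := exists_paddings n u
  obtain ⟨w, hw⟩ := Finset.card_pos.1 (ht ▸ Nat.choose_pos hn)
  exact ⟨w, (ht' w hw).1, by rw [ev_addOne, (ht' w hw).2, hu]⟩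

end Cogrowth

open Cogrowth in
/-- If `S` has maximal global cogrowth with respect to some finite choice of generators,
then for every finite subset `K` of `S¹ = WithOne S`, the monoid `S¹` has maximal global
cogrowth with respect to some finite choice of generators containing a representative of
every element of `K`. -/
theorem stmt4 {X : Type} {S : Type*} [Semigroup S] [Fintype X] [Nonempty X]
    (π : FreeSemigroup X →ₙ* S) (hπ : Function.Surjective π)
    (hmax : gammaRate π = Fintype.card X) (K : Finset (WithOne S)) :
    ∃ (Z : Type) (hZ : Fintype Z), Nonempty Z ∧
      ∃ ρ : FreeSemigroup Z →ₙ* WithOne S, Function.Surjective ρ ∧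
        (∀ k ∈ K, ∃ z : Z, ρ (FreeSemigroup.of z) = k) ∧
        gammaRate ρ = @Fintype.card Z hZ := by
  classical
  choose N hN using exists_word π hπ
  obtain ⟨m, hm0, hm⟩ : ∃ m, 0 < m ∧ ∀ k ∈ K, N k ≤ m :=
    ⟨K.sup N + 1, Nat.succ_pos _, fun k hk => (Finset.le_sup hk).trans (Nat.le_succ _)⟩
  set φ : Option X → WithOne S := addOne fun x => WithOne.coeMulHom (π (.of x)) with hφ
  refine ⟨List.Vector (Option X) m, inferInstance, ⟨List.Vector.replicate m none⟩,
    FreeSemigroup.lift (block φ m), ?_, ?_, ?_⟩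
  · intro s
    obtain ⟨l, hl, hs⟩ := hN s (m * (N s + 1)) (by nlinarith)
    obtain ⟨L, hL, rfl⟩ := exists_blocks m _ l hl
    obtain ⟨x, L, rfl⟩ := List.exists_cons_of_length_eq_add_one hL
    refine ⟨⟨x, L⟩, ?_⟩
    rw [← hs, ← ev_block]
    exact (ev_toL (FreeSemigroup.lift (block φ m)) (MulHom.id _) ⟨x, L⟩).symm
  · intro k hk
    obtain ⟨l, hl, rfl⟩ := hN k m (hm k hk)
    exact ⟨⟨l, hl⟩, rfl⟩
  · rw [← Nat.card_eq_fintype_card] at hmax ⊢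
    have : Nonempty (List.Vector (Option X) m) := ⟨List.Vector.replicate m none⟩
    exact gammaRate_of_maximal _ (MulHom.id _) Function.injective_id
      ((maximal_of_gammaRate π WithOne.coeMulHom WithOne.coe_injective hmax).addOne.block hm0)
end

section
/- Let S be a semigroup with a finite choice of generators X having maximal global cogrowth (γ^{S,X} = |X|), and suppose M : ℓ²(S¹) → ℓ²(S¹) is a right random-walk Markov operator for (S, X). Then limsup_{n→∞} ‖Mⁿ‖^{1/n} ≥ 1, where ‖·‖ denotes the operator norm; that is, the spectral radius of M is at least 1. -/
/-! The vector `M ^ n χ₁` is the distribution of the endpoint of the `n`-step right random walk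
started at `1`, i.e. the average of `χ_{w̄}` over the words `w` of length `n`
(`markov_pow_single`). Hence `|X| ^ (i + j) ⟪M ^ i χ₁, M ^ j χ₁⟫` counts the pairs of words of
lengths `i`, `j` with equal value, and Cauchy–Schwarz gives
`γ(n) ≤ |X| ^ n * ∑_{i + j = n} ‖M ^ i‖ * ‖M ^ j‖` (`gammaFn_le`).

If the limsup of `‖M ^ n‖ ^ (1 / n)` were less than `1`, then `‖M ^ n‖ ≤ C r ^ n` for some `r < 1`,
so `γ(n) ≤ |X| ^ n (n + 1) C ^ 2 r ^ n`, and the cogrowth rate would be smaller than `|X|`. -/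

open Filter

/-- `M` is a right random-walk Markov operator for `(S, X)` (with generators given by `π`):
the image of the characteristic function of `{t}` takes at `s` the value
`#{x ∈ X : t·x̄ = s} / |X|`. -/
def IsRightMarkovOperator {X : Type} {S : Type*} [Semigroup S] [Fintype X]
    [DecidableEq (WithOne S)] (π : FreeSemigroup X →ₙ* S)
    (M : lp (fun _ : WithOne S => ℝ) 2 →L[ℝ] lp (fun _ : WithOne S => ℝ) 2) : Prop :=
  ∀ t s : WithOne S,
    (M (lp.single 2 t (1 : ℝ))) s =
      (Nat.card {x : X // t * (π (FreeSemigroup.of x) : WithOne S) = s} : ℝ) / Fintype.card X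

/-- The value in `S¹` of a possibly empty word; the empty word has value `1`. -/
def wordVal {X : Type} {S : Type*} [Semigroup S] (π : FreeSemigroup X →ₙ* S) (l : List X) :
    WithOne S :=
  (l.map fun x => (π (FreeSemigroup.of x) : WithOne S)).prod

lemma wordVal_cons {X : Type} {S : Type*} [Semigroup S] (π : FreeSemigroup X →ₙ* S) (x : X)
    (l : List X) :
    wordVal π (x :: l) = (π (FreeSemigroup.of x) : WithOne S) * wordVal π l := by
  simp [wordVal]

lemma wordVal_append {X : Type} {S : Type*} [Semigroup S] (π : FreeSemigroup X →ₙ* S)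
    (l m : List X) :
    wordVal π (l ++ m) = wordVal π l * wordVal π m := by
  simp [wordVal]

lemma coe_map_eq_wordVal {X : Type} {S : Type*} [Semigroup S] (π : FreeSemigroup X →ₙ* S)
    (p : FreeSemigroup X) : (π p : WithOne S) = wordVal π (p.head :: p.tail) := by
  induction p using FreeSemigroup.recOnMul with
  | ih1 x => simp [wordVal]
  | ih2 x y hx hy =>
    rw [map_mul, WithOne.coe_mul, hx, hy, ← wordVal_append]
    rfl

section
variable {X : Type} {S : Type*} [Semigroup S] [Fintype X]
    [DecidableEq (WithOne S)] {π : FreeSemigroup X →ₙ* S}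
    {M : lp (fun _ : WithOne S => ℝ) 2 →L[ℝ] lp (fun _ : WithOne S => ℝ) 2}

lemma markov_single (hM : IsRightMarkovOperator π M) (t : WithOne S) :
    M (lp.single 2 t (1 : ℝ)) = (Fintype.card X : ℝ)⁻¹ •
      ∑ x : X, lp.single 2 (t * (π (FreeSemigroup.of x) : WithOne S)) (1 : ℝ) := by
  ext s
  rw [hM t s, Nat.card_eq_fintype_card, Fintype.card_subtype, div_eq_inv_mul, Finset.card_filter]
  have hsum : ∀ u : X → lp (fun _ : WithOne S => ℝ) 2, (∑ x, u x) s = ∑ x, u x s := fun u => by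
    rw [lp.coeFn_sum]
    exact Finset.sum_apply s _ _
  rw [lp.coeFn_smul]
  change _ = (Fintype.card X : ℝ)⁻¹ * _
  rw [hsum]
  simp [Pi.single_apply, eq_comm]

/-- `M ^ n` sends `χ_t` to the average of the `χ_{t w̄}` over the words `w` of length `n`. -/
lemma markov_pow_single (hM : IsRightMarkovOperator π M) (n : ℕ) (t : WithOne S) :
    (M ^ n) (lp.single 2 t (1 : ℝ)) = ((Fintype.card X : ℝ) ^ n)⁻¹ •
      ∑ f : Fin n → X, lp.single 2 (t * wordVal π (List.ofFn f)) (1 : ℝ) := by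
  induction n generalizing t with
  | zero => simp [wordVal]
  | succ n ih =>
    rw [pow_succ, mul_apply_eq_comp, markov_single hM, map_smul, map_sum]
    simp only [ih]
    rw [← Finset.smul_sum, smul_smul, pow_succ, mul_inv_rev]
    congr 1
    rw [← (Fin.consEquiv fun _ : Fin (n + 1) => X).sum_comp, Fintype.sum_prod_type]
    simp [Fin.consEquiv, List.ofFn_succ, wordVal_cons, mul_assoc]

/-- Cauchy–Schwarz bound for the number of pairs of words of lengths `i`, `j` of equal value. -/
lemma card_pairs_le [Nonempty X] (hM : IsRightMarkovOperator π M) (i j : ℕ) :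
    (((Finset.univ : Finset ((Fin i → X) × (Fin j → X))).filter fun q =>
      wordVal π (List.ofFn q.1) = wordVal π (List.ofFn q.2)).card : ℝ) ≤
      (Fintype.card X : ℝ) ^ (i + j) * (‖M ^ i‖ * ‖M ^ j‖) := by
  have hk : (0 : ℝ) < Fintype.card X := by exact_mod_cast Fintype.card_pos
  set e : lp (fun _ : WithOne S => ℝ) 2 := lp.single 2 1 (1 : ℝ) with he
  have hnorm : ‖e‖ = 1 := by
    rw [he, lp.norm_single (by norm_num)]
    simp
  have hb : ∀ n, ‖(M ^ n) e‖ ≤ ‖M ^ n‖ := fun n => by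
    simpa [hnorm] using (M ^ n).le_opNorm e
  have hin : (((Finset.univ : Finset ((Fin i → X) × (Fin j → X))).filter fun q =>
      wordVal π (List.ofFn q.1) = wordVal π (List.ofFn q.2)).card : ℝ) =
      (Fintype.card X : ℝ) ^ (i + j) * inner ℝ ((M ^ i) e) ((M ^ j) e) := by
    rw [he, markov_pow_single hM, markov_pow_single hM, real_inner_smul_left,
      real_inner_smul_right, sum_inner]
    simp only [inner_sum, lp.inner_single_left]
    rw [Finset.card_filter, Fintype.sum_prod_type, pow_add]
    field_simp
    simp [Pi.single_apply]
  rw [hin]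
  gcongr
  exact (real_inner_le_norm _ _).trans (by gcongr <;> exact hb _)

lemma gammaFn_le_s5 [Nonempty X] (hM : IsRightMarkovOperator π M) (n : ℕ) :
    (gammaFn π n : ℝ) ≤ (Fintype.card X : ℝ) ^ n *
      ∑ q ∈ Finset.HasAntidiagonal.antidiagonal n, ‖M ^ q.1‖ * ‖M ^ q.2‖ := by
  classical
  let P : ∀ q : ℕ × ℕ, Finset ((Fin q.1 → X) × (Fin q.2 → X)) := fun q =>
    Finset.univ.filter fun r => wordVal π (List.ofFn r.1) = wordVal π (List.ofFn r.2)
  let T : Finset (List X × List X) := (Finset.HasAntidiagonal.antidiagonal n).biUnion fun q =>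
    (P q).image fun r => (List.ofFn r.1, List.ofFn r.2)
  have h1 : gammaFn π n ≤ T.card := by
    have hmem : ∀ p : {p : FreeSemigroup X × FreeSemigroup X //
        p.1.length + p.2.length = n ∧ π p.1 = π p.2},
        (p.1.1.head :: p.1.1.tail, p.1.2.head :: p.1.2.tail) ∈ T := by
      rintro ⟨⟨u, v⟩, hlen, huv⟩
      refine Finset.mem_biUnion.2 ⟨(u.length, v.length), Finset.HasAntidiagonal.mem_antidiagonal.2 hlen, ?_⟩
      refine Finset.mem_image.2 ⟨((u.head :: u.tail).get, (v.head :: v.tail).get), ?_, ?_⟩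
      · refine Finset.mem_filter.2 ⟨Finset.mem_univ _, ?_⟩
        have := congrArg (fun s : S => (s : WithOne S)) huv
        simp only [coe_map_eq_wordVal] at this
        convert this using 2 <;> exact List.ofFn_get _
      · exact Prod.ext (List.ofFn_get (u.head :: u.tail)) (List.ofFn_get (v.head :: v.tail))
    rw [gammaFn, ← Nat.card_eq_finsetCard T]
    refine Nat.card_le_card_of_injective (fun p => (⟨_, hmem p⟩ : T)) ?_
    rintro ⟨⟨u, v⟩, _⟩ ⟨⟨u', v'⟩, _⟩ h
    simp only [Subtype.mk.injEq, Prod.mk.injEq, List.cons.injEq] at h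
    exact Subtype.ext (Prod.ext (FreeSemigroup.ext h.1.1 h.1.2) (FreeSemigroup.ext h.2.1 h.2.2))
  have h2 : T.card ≤ ∑ q ∈ Finset.HasAntidiagonal.antidiagonal n, (P q).card :=
    Finset.card_biUnion_le.trans (Finset.sum_le_sum fun _ _ => Finset.card_image_le)
  calc (gammaFn π n : ℝ) ≤ ∑ q ∈ Finset.HasAntidiagonal.antidiagonal n, ((P q).card : ℝ) := by
        exact_mod_cast h1.trans h2
    _ ≤ ∑ q ∈ Finset.HasAntidiagonal.antidiagonal n,
          (Fintype.card X : ℝ) ^ n * (‖M ^ q.1‖ * ‖M ^ q.2‖) := by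
        refine Finset.sum_le_sum fun q hq => ?_
        rw [← Finset.HasAntidiagonal.mem_antidiagonal.1 hq]
        exact card_pairs_le hM q.1 q.2
    _ = _ := (Finset.mul_sum _ _ _).symm

end

/-- A limsup of `‖a ^ n‖ ^ (1 / n)` below `1` forces exponential decay of the powers of `a`, with a
constant valid for every `n`. -/
lemma exists_norm_pow_le {A : Type*} [SeminormedRing A] [NormOneClass A] (a : A)
    (h : Filter.atTop.limsup (fun n : ℕ => ‖a ^ n‖ ^ (1 / (n : ℝ))) < 1) :
    ∃ r C : ℝ, 0 < r ∧ r < 1 ∧ 0 ≤ C ∧ ∀ n : ℕ, ‖a ^ n‖ ≤ C * r ^ n := by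
  obtain ⟨r, hr, hr1⟩ := exists_between (max_lt h one_pos)
  obtain ⟨hLr, hr0⟩ := max_lt_iff.1 hr
  have hroot : ∀ {b c : ℝ} {n : ℕ}, 0 ≤ b → 0 ≤ c → n ≠ 0 →
      (b ^ (1 / (n : ℝ)) ≤ c ↔ b ≤ c ^ n) := by
    intro b c n hb hc hn
    rw [one_div, Real.rpow_inv_le_iff_of_pos hb hc (by positivity), Real.rpow_natCast]
  have hbdd : IsBoundedUnder (· ≤ ·) atTop (fun n : ℕ => ‖a ^ n‖ ^ (1 / (n : ℝ))) := by
    refine isBoundedUnder_of_eventually_le (a := ‖a‖) ?_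
    filter_upwards [eventually_ne_atTop 0] with n hn
    exact (hroot (norm_nonneg _) (norm_nonneg _) hn).2 (norm_pow_le a n)
  have hev := eventually_lt_of_limsup_lt hLr hbdd
  obtain ⟨N, hN⟩ := eventually_atTop.1 (hev.and (eventually_ne_atTop 0))
  have hnn : ∀ i ∈ Finset.range N, 0 ≤ ‖a ^ i‖ / r ^ i := fun i _ => by positivity
  refine ⟨r, 1 + ∑ i ∈ Finset.range N, ‖a ^ i‖ / r ^ i, hr0, hr1,
    add_nonneg zero_le_one (Finset.sum_nonneg hnn), fun n => ?_⟩
  rw [← div_le_iff₀ (pow_pos hr0 n)]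
  rcases lt_or_ge n N with hn | hn
  · have := Finset.single_le_sum hnn (Finset.mem_range.2 hn)
    linarith
  · have h1 := (hroot (norm_nonneg _) hr0.le (hN n hn).2).1 (hN n hn).1.le
    have := (div_le_one (pow_pos hr0 n)).2 h1
    linarith [Finset.sum_nonneg hnn]

theorem stmt5 {X : Type} {S : Type*} [Semigroup S] [Fintype X] [Nonempty X]
    [DecidableEq (WithOne S)]
    (π : FreeSemigroup X →ₙ* S) (hπ : Function.Surjective π)
    (hmax : gammaRate π = Fintype.card X)
    (M : lp (fun _ : WithOne S => ℝ) 2 →L[ℝ] lp (fun _ : WithOne S => ℝ) 2)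
    (hM : IsRightMarkovOperator π M) :
    1 ≤ Filter.atTop.limsup (fun n : ℕ => ‖M ^ n‖ ^ (1 / (n : ℝ))) := by
  by_contra! hlt
  have hk : (0 : ℝ) < Fintype.card X := by exact_mod_cast Fintype.card_pos
  -- `NormOneClass` for the endomorphism algebra comes from nontriviality of `ℓ²(S¹)`.
  have : Nontrivial (lp (fun _ : WithOne S => ℝ) 2) := by
    refine ⟨lp.single 2 1 (1 : ℝ), 0, fun h => ?_⟩
    have := congrArg norm h
    rw [lp.norm_single (by norm_num)] at this
    simp at this
  obtain ⟨r, C, hr0, hr1, hC, hpow⟩ := exists_norm_pow_le M hlt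
  -- The gap between `r` and `ρ` absorbs the polynomial factor `(n + 1) C ^ 2`.
  obtain ⟨ρ, hrρ, hρ1⟩ := exists_between hr1
  have hρ0 := hr0.trans hrρ
  have hq0 : 0 ≤ r / ρ := by positivity
  have hq1 : r / ρ < 1 := (div_lt_one hρ0).2 hrρ
  have hlim : Tendsto (fun n : ℕ => C ^ 2 * ((n : ℝ) * (r / ρ) ^ n + (r / ρ) ^ n)) atTop (nhds 0) := by
    simpa using ((tendsto_self_mul_const_pow_of_lt_one hq0 hq1).add
      (tendsto_pow_atTop_nhds_zero_of_lt_one hq0 hq1)).const_mul (C ^ 2)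
  have hle : gammaRate π ≤ Fintype.card X * ρ := by
    refine limsup_le_of_le ?_ ?_
    · exact (isBoundedUnder_of_eventually_ge (a := 0)
        (Eventually.of_forall fun n => by positivity)).isCoboundedUnder_le
    filter_upwards [hlim.eventually_le_const one_pos, eventually_ne_atTop 0] with n hn hn0
    rw [one_div, Real.rpow_inv_le_iff_of_pos (by positivity) (by positivity) (by positivity),
      Real.rpow_natCast, mul_pow]
    refine (gammaFn_le_s5 hM n).trans ?_
    gcongr
    calc ∑ q ∈ Finset.HasAntidiagonal.antidiagonal n, ‖M ^ q.1‖ * ‖M ^ q.2‖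
        ≤ ∑ q ∈ Finset.HasAntidiagonal.antidiagonal n, C ^ 2 * r ^ n := by
          refine Finset.sum_le_sum fun q hq => ?_
          rw [← Finset.HasAntidiagonal.mem_antidiagonal.1 hq]
          calc ‖M ^ q.1‖ * ‖M ^ q.2‖ ≤ (C * r ^ q.1) * (C * r ^ q.2) := by
                gcongr <;> exact hpow _
            _ = C ^ 2 * r ^ (q.1 + q.2) := by ring
      _ = C ^ 2 * ((n : ℝ) * (r / ρ) ^ n + (r / ρ) ^ n) * ρ ^ n := by
          rw [Finset.sum_const, Finset.Nat.card_antidiagonal, nsmul_eq_mul, div_pow]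
          push_cast
          field_simp
      _ ≤ ρ ^ n := mul_le_of_le_one_left (by positivity) hn
  rw [hmax] at hle
  nlinarith
end

section
/- Let S be a semigroup with a finite choice of generators X, suppose S satisfies the right Følner condition, and suppose M : ℓ²(S¹) → ℓ²(S¹) is a right random-walk Markov operator for (S, X). Then ‖Mⁿ‖ ≥ 1 for every n ≥ 1, where ‖·‖ denotes the operator norm; in particular the spectral radius of M is at least 1. -/
/-!
Since `π` sends words of length `n` to `S`, the power `M ^ n` is again the operator of a uniform
walk, whose steps are the values of these words: it maps `χ_t` to the average of the `χ_{t · y w}`.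
It therefore suffices to show `1 ≤ ‖M‖` for any bounded operator averaging over finitely many right
translations (`IsWalk.one_le_norm`).

Right multiplication need not be injective, but boundedness of `M` limits how far it is from that:
if `A` consists of elements with the same product `a · s = b`, for a step `s`, then
`|A| / |X| ≤ ⟪χ_b, M χ_A⟫ ≤ ‖M‖ √|A|`, so `|A| ≤ K := (‖M‖ |X|)²`. For a Følner set `F` at most
`K ε |F|` elements of `F` are thus moved out of `F` by a given step, whence
`(1 - K ε) |F| ≤ ⟪χ_F, M χ_F⟫ ≤ ‖M‖ |F|`. Letting `ε → 0` gives the bound.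
-/

open Filter

/-- `S` satisfies the right Følner condition: for every finite `H ⊆ S` and `ε > 0` there is
a finite nonempty `F ⊆ S` with `|Fs \ F| ≤ ε|F|` for all `s ∈ H`. -/
def RightFolnerCondition (S : Type*) [Semigroup S] [DecidableEq S] : Prop :=
  ∀ (H : Finset S) (ε : ℝ), 0 < ε →
    ∃ F : Finset S, F.Nonempty ∧
      ∀ s ∈ H, (((F.image (fun f => f * s)) \ F).card : ℝ) ≤ ε * F.card

/-- `M` is the operator of the right random walk with uniformly distributed steps `y x`, `x : X`,
where `e t` plays the role of the characteristic function of `{t}`. Orthonormality of `e` is not part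
of the definition and is assumed separately where needed. -/
def IsWalk {S E X : Type*} [Semigroup S] [Fintype X] [NormedAddCommGroup E]
    [InnerProductSpace ℝ E] (e : WithOne S → E) (y : X → S) (M : E →L[ℝ] E) : Prop :=
  ∀ t : WithOne S, M (e t) = (Fintype.card X : ℝ)⁻¹ • ∑ x, e (t * (y x : WithOne S))

theorem norm_sum_sq {S E : Type*} [NormedAddCommGroup E] [InnerProductSpace ℝ E]
    {e : WithOne S → E} (he : Orthonormal ℝ e) (A : Finset S) :
    ‖∑ a ∈ A, e (a : WithOne S)‖ ^ 2 = A.card := by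
  have h := (he.comp _ (WithOne.coe_injective (α := S))).inner_sum (fun _ => 1) (fun _ => 1) A
  simpa [real_inner_self_eq_norm_sq] using h

section Walk

variable {S E X : Type*} [Semigroup S] [Fintype X] [NormedAddCommGroup E]
  [InnerProductSpace ℝ E] {e : WithOne S → E}

theorem IsWalk.mul {Y : Type*} [Fintype Y] {y : X → S} {z : Y → S} {M N : E →L[ℝ] E}
    (hM : IsWalk e y M) (hN : IsWalk e z N) :
    IsWalk e (fun p : Y × X => z p.1 * y p.2) (M * N) := by
  intro t
  rw [mul_apply_eq_comp, hN t, map_smul, map_sum, Fintype.sum_prod_type,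
    Finset.sum_congr rfl (fun x _ => hM _), ← Finset.smul_sum, smul_smul, Fintype.card_prod]
  push_cast
  rw [mul_inv]
  simp only [mul_assoc]

/-- The `(n + 1)`-st power of a walk operator is the operator of a walk on words of length
`n + 1`. -/
theorem IsWalk.pow {X : Type} [Fintype X] [Nonempty X] {y : X → S} {M : E →L[ℝ] E}
    (hM : IsWalk e y M) (n : ℕ) :
    ∃ (Y : Type) (_ : Fintype Y) (_ : Nonempty Y) (z : Y → S), IsWalk e z (M ^ (n + 1)) := by
  induction n with
  | zero => exact ⟨X, inferInstance, inferInstance, y, by simpa using hM⟩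
  | succ n ih =>
    obtain ⟨Y, _, _, z, hz⟩ := ih
    refine ⟨Y × X, inferInstance, inferInstance, fun p => z p.1 * y p.2, ?_⟩
    rw [pow_succ']
    exact hM.mul hz

/-- Counting form of the matrix coefficients of a walk operator between indicator functions. -/
theorem IsWalk.inner_sum [DecidableEq S] {y : X → S} {M : E →L[ℝ] E} (hM : IsWalk e y M)
    (he : Orthonormal ℝ e) (A B : Finset S) :
    inner ℝ (∑ a ∈ A, e (a : WithOne S)) (M (∑ b ∈ B, e (b : WithOne S))) =
      (Fintype.card X : ℝ)⁻¹ * ∑ x, ((B.filter fun b => b * y x ∈ A).card : ℝ) := by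
  classical
  have he' := orthonormal_iff_ite.1 he
  rw [map_sum, Finset.sum_congr rfl (fun b _ => hM _), ← Finset.smul_sum, inner_smul_right,
    Finset.sum_comm, _root_.inner_sum]
  congr 1
  refine Finset.sum_congr rfl fun x _ => ?_
  rw [_root_.inner_sum, Finset.card_filter, Nat.cast_sum]
  refine Finset.sum_congr rfl fun b _ => ?_
  rw [_root_.sum_inner]
  simp only [← WithOne.coe_mul, he', WithOne.coe_inj]
  simp

/-- A bounded walk operator has fibres of uniformly bounded size under each right translation by
a step. -/
theorem IsWalk.card_fiber_le [DecidableEq S] [Nonempty X] {y : X → S} {M : E →L[ℝ] E} (hM : IsWalk e y M)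
    (he : Orthonormal ℝ e) (F : Finset S) (x : X) (b : S) :
    ((F.filter fun f => f * y x = b).card : ℝ) ≤ (‖M‖ * Fintype.card X) ^ 2 := by
  set A := F.filter fun f => f * y x = b with hA
  have hX : (0 : ℝ) < Fintype.card X := by exact_mod_cast Fintype.card_pos
  have h1 := hM.inner_sum he {b} A
  have h2 : (A.card : ℝ) ≤ ∑ z, ((A.filter fun a => a * y z ∈ ({b} : Finset S)).card : ℝ) := by
    refine le_trans (le_of_eq ?_) (Finset.single_le_sum
      (f := fun z => ((A.filter fun a => a * y z ∈ ({b} : Finset S)).card : ℝ))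
      (fun _ _ => Nat.cast_nonneg _) (Finset.mem_univ x))
    congr 2
    refine (Finset.filter_true_of_mem fun a ha => ?_).symm
    simpa using (Finset.mem_filter.1 ha).2
  have h3 := (real_inner_le_norm (∑ a ∈ ({b} : Finset S), e (a : WithOne S))
    (M (∑ a ∈ A, e (a : WithOne S)))).trans
    (mul_le_mul_of_nonneg_left (M.le_opNorm _) (norm_nonneg _))
  have h4 := norm_sum_sq he A
  rw [h1, Finset.sum_singleton, he.1, one_mul] at h3
  set r := ‖∑ a ∈ A, e (a : WithOne S)‖
  have hr : 0 ≤ r := norm_nonneg _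
  have h5 : r ^ 2 ≤ (‖M‖ * Fintype.card X) * r := by
    rw [h4]
    refine h2.trans ?_
    rw [inv_mul_le_iff₀ hX] at h3
    linarith
  have h6 : r ≤ ‖M‖ * Fintype.card X := by
    rcases hr.eq_or_lt with h | h
    · rw [← h]; positivity
    · exact le_of_mul_le_mul_right (by linarith [sq r]) h
  rw [← h4]
  gcongr

/-- By the fibre bound, a Følner set `F` loses few elements, counted in `F` and not only in the image
`Fs`, under each step, so its indicator function is almost fixed by `M` in inner product. -/
theorem IsWalk.one_le_norm [DecidableEq S] [Nonempty X] {y : X → S} {M : E →L[ℝ] E}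
    (hM : IsWalk e y M) (he : Orthonormal ℝ e) (hF : RightFolnerCondition S) : 1 ≤ ‖M‖ := by
  have hX : (0 : ℝ) < Fintype.card X := by exact_mod_cast Fintype.card_pos
  obtain ⟨K, hK⟩ := exists_nat_ge ((‖M‖ * Fintype.card X) ^ 2)
  refine le_of_forall_pos_le_add fun δ hδ => ?_
  -- `K + 1` rather than `K`, so as not to divide by zero.
  obtain ⟨F, hF0, hF⟩ := hF (Finset.univ.image y) (δ / (K + 1)) (by positivity)
  have hFc : (0 : ℝ) < F.card := by exact_mod_cast hF0.card_pos
  have stay (x : X) : (1 - δ) * F.card ≤ ((F.filter fun f => f * y x ∈ F).card : ℝ) := by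
    set B := F.filter fun f => f * y x ∉ F with hB
    have h1 : B.card ≤ K * (B.image fun f => f * y x).card := by
      refine Finset.card_le_mul_card_image B K fun b _ => ?_
      exact_mod_cast (hM.card_fiber_le he B x b).trans hK
    have h2 : B.image (fun f => f * y x) ⊆ (F.image fun f => f * y x) \ F := by
      intro s hs
      obtain ⟨f, hf, rfl⟩ := Finset.mem_image.1 hs
      obtain ⟨hf1, hf2⟩ := Finset.mem_filter.1 hf
      exact Finset.mem_sdiff.2 ⟨Finset.mem_image_of_mem _ hf1, hf2⟩
    have h3 := hF (y x) (Finset.mem_image_of_mem _ (Finset.mem_univ x))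
    have h4 : (B.card : ℝ) ≤ K * (δ / (K + 1) * F.card) := by
      calc (B.card : ℝ) ≤ K * (B.image fun f => f * y x).card := by exact_mod_cast h1
        _ ≤ K * (δ / (K + 1) * F.card) := by
          gcongr
          exact le_trans (by exact_mod_cast Finset.card_le_card h2) h3
    have h5 : K * (δ / (K + 1) * F.card) ≤ δ * F.card := by
      have : (K : ℝ) * (δ / (K + 1)) ≤ δ := by
        rw [mul_div_assoc', div_le_iff₀ (by positivity)]
        nlinarith
      calc K * (δ / (K + 1) * F.card) = K * (δ / (K + 1)) * F.card := by ring
        _ ≤ δ * F.card := by gcongr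
    have h6 : ((F.filter fun f => f * y x ∈ F).card : ℝ) + B.card = F.card := by
      exact_mod_cast Finset.card_filter_add_card_filter_not (s := F) fun f => f * y x ∈ F
    linarith
  have h1 := hM.inner_sum he F F
  have h2 := (real_inner_le_norm (∑ a ∈ F, e (a : WithOne S))
    (M (∑ a ∈ F, e (a : WithOne S)))).trans
    (mul_le_mul_of_nonneg_left (M.le_opNorm _) (norm_nonneg _))
  have h3 := norm_sum_sq he F
  have h4 : (Fintype.card X : ℝ) * ((1 - δ) * F.card) ≤
      ∑ x, ((F.filter fun f => f * y x ∈ F).card : ℝ) := by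
    simpa using Finset.sum_le_sum fun x (_ : x ∈ Finset.univ) => stay x
  rw [← le_inv_mul_iff₀ hX] at h4
  have h5 : (1 - δ) * F.card ≤ ‖M‖ * F.card := by
    refine h4.trans (h1.symm.le.trans (h2.trans_eq ?_))
    rw [← h3]
    ring
  linarith [le_of_mul_le_mul_right h5 hFc]

end Walk

theorem orthonormal_single {T : Type*} [DecidableEq T] :
    Orthonormal ℝ (fun t : T => (lp.single 2 t (1 : ℝ) : lp (fun _ : T => ℝ) 2)) := by
  rw [orthonormal_iff_ite]
  intro i j
  rw [lp.inner_single_left, lp.single_apply]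
  simp [Pi.single_apply]

theorem IsRightMarkovOperator.isWalk {X : Type} {S : Type*} [Semigroup S] [Fintype X]
    [DecidableEq (WithOne S)] {π : FreeSemigroup X →ₙ* S}
    {M : lp (fun _ : WithOne S => ℝ) 2 →L[ℝ] lp (fun _ : WithOne S => ℝ) 2}
    (hM : IsRightMarkovOperator π M) :
    IsWalk (fun t => lp.single 2 t (1 : ℝ)) (fun x => π (FreeSemigroup.of x)) M := by
  intro t
  ext s
  rw [hM t s, lp.coeFn_smul, Pi.smul_apply, lp.coeFn_sum, Finset.sum_apply, Nat.card_eq_fintype_card,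
    Fintype.card_subtype, Finset.card_filter, smul_eq_mul, div_eq_inv_mul]
  simp [Pi.single_apply, eq_comm]

theorem stmt6 {X : Type} {S : Type*} [Semigroup S] [Fintype X] [Nonempty X]
    [DecidableEq S] [DecidableEq (WithOne S)]
    (π : FreeSemigroup X →ₙ* S) (hπ : Function.Surjective π)
    (hF : RightFolnerCondition S)
    (M : lp (fun _ : WithOne S => ℝ) 2 →L[ℝ] lp (fun _ : WithOne S => ℝ) 2)
    (hM : IsRightMarkovOperator π M) :
    ∀ n : ℕ, 1 ≤ n → 1 ≤ ‖M ^ n‖ := by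
  intro n hn
  obtain ⟨m, rfl⟩ := Nat.exists_eq_add_of_le' hn
  obtain ⟨Y, _, _, z, hz⟩ := hM.isWalk.pow m
  exact hz.one_le_norm orthonormal_single hF
end

section
/- Let S be a left amenable semigroup with a finite choice of generators X, and suppose M : ℓ²(S¹) → ℓ²(S¹) is a left random-walk Markov operator for (S, X). Then ‖Mⁿ‖ ≥ 1 for every n ≥ 1, where ‖·‖ denotes the operator norm; in particular the spectral radius of M is at least 1. -/
/-! The argument is Day's convexity argument followed by the square-root trick.

*Reiter's condition* (`exists_almost_invariant`): for finitely many `a w ∈ S` and `ε > 0` there is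
a finitely supported probability vector `p` on `S` with `‖a w · p - p‖₁ ≤ ε` for all `w`, where
`a · p` is the pushforward of `p` under left multiplication by `a`. Otherwise the convex set of
all families `(a w · p - p)_w` has closure missing `0` in a finite power of `ℓ¹(S)`, and
Hahn–Banach gives bounded functions `φ w` on `S` and `u > 0` with
`∑ w, (φ w (a w * s) - φ w s) > u` for every `s`. Integrating against the invariant mean gives
`0 ≥ u`. Only finite-valued functions need to be integrated, because a large multiple of `φ w` may
be replaced by its integer part (`no_displacement`).

*Square roots* (`sum_sqrt_ge`): for `n ≥ 1`, `M ^ n` is the average of the left translations by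
finitely many elements `a w` of `S`. If `p` is as above and `g = √p`, then `‖g‖₂ = 1` and
`⟪M ^ n g, g⟫` is the average over `w` of `∑ t, √(p t) √(p (a w * t))`. Left translation need not
be injective, but grouping the points `t` by `s = a w * t`, and using that a sum of minima
dominates the minimum with the sum, bounds each of these below by
`∑ s, min (p s) ((a w · p) s) ≥ 1 - ε`. Hence `‖M ^ n‖ ≥ 1 - ε` for every `ε > 0`. -/

open Filter

/-- `S` is left amenable: there is a left-invariant finitely additive probability
measure on the subsets of `S`. -/
def IsLeftAmenable (S : Type*) [Semigroup S] : Prop :=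
  ∃ μ : Set S → ℝ,
    (∀ A : Set S, 0 ≤ μ A ∧ μ A ≤ 1) ∧
    μ Set.univ = 1 ∧
    (∀ A B : Set S, Disjoint A B → μ (A ∪ B) = μ A + μ B) ∧
    (∀ (a : S) (T : Set S), μ {s : S | a * s ∈ T} = μ T)

/-- `M` is a left random-walk Markov operator for `(S, X)` (with generators given by `π`):
the image of the characteristic function of `{t}` takes at `s` the value
`#{x ∈ X : x̄·t = s} / |X|`. -/
def IsLeftMarkovOperator {X : Type} {S : Type*} [Semigroup S] [Fintype X]
    [DecidableEq (WithOne S)] (π : FreeSemigroup X →ₙ* S)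
    (M : lp (fun _ : WithOne S => ℝ) 2 →L[ℝ] lp (fun _ : WithOne S => ℝ) 2) : Prop :=
  ∀ t s : WithOne S,
    (M (lp.single 2 t (1 : ℝ))) s =
      (Nat.card {x : X // (π (FreeSemigroup.of x) : WithOne S) * t = s} : ℝ) / Fintype.card X

/-- Finite additivity, iterated over the fibres of `F` above a finite set. -/
lemma fibre_sum {S ι : Type*} {μ : Set S → ℝ}
    (hadd : ∀ A B : Set S, Disjoint A B → μ (A ∪ B) = μ A + μ B) (F : S → ι) (B : Finset ι) :
    μ {s | F s ∈ B} = ∑ i ∈ B, μ {s | F s = i} := by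
  classical
  have h0 : μ ∅ = 0 := by
    have := hadd ∅ ∅ (by simp)
    simp at this
    exact this
  induction B using Finset.induction_on with
  | empty => simp [h0]
  | insert i B hi ih =>
    rw [Finset.sum_insert hi, ← ih, ← hadd]
    · congr 1
      ext s
      simp
    · rw [Set.disjoint_left]
      rintro s rfl h
      exact hi h

/-- Change of variables for the integral of a finite-valued function: it may be computed from
the fibres of any finite-valued map `F` that the function factors through. -/
lemma fibre_sum_comp {S ι κ : Type*} [Fintype ι] [Fintype κ] {μ : Set S → ℝ}
    (hadd : ∀ A B : Set S, Disjoint A B → μ (A ∪ B) = μ A + μ B) (F : S → ι) (q : ι → κ)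
    (h : κ → ℝ) :
    ∑ i, μ {s | F s = i} * h (q i) = ∑ k, μ {s | q (F s) = k} * h k := by
  classical
  rw [← Finset.sum_fiberwise (s := Finset.univ) (g := q)]
  refine Finset.sum_congr rfl fun k _ => ?_
  have := fibre_sum hadd F (Finset.univ.filter fun i => q i = k)
  simp only [Finset.mem_filter, Finset.mem_univ, true_and] at this
  rw [this, Finset.sum_mul]
  refine Finset.sum_congr rfl fun i hi => ?_
  rw [(Finset.mem_filter.1 hi).2]

/-- On a left amenable semigroup, a sum of differences `φ w (a w * s) - φ w s`, with each
`φ w = h ∘ ψ w` finite-valued, has mean zero, so it is not everywhere positive. -/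
lemma no_displacement {S W ι : Type*} [Semigroup S] [Fintype W] [Fintype ι]
    (hA : IsLeftAmenable S) (a : W → S) (ψ : W → S → ι) (h : ι → ℝ)
    (hpos : ∀ s, 0 < ∑ w, (h (ψ w (a w * s)) - h (ψ w s))) : False := by
  classical
  obtain ⟨μ, h01, huniv, hadd, hinv⟩ := hA
  have h0 : μ ∅ = 0 := by
    have := hadd ∅ ∅ (by simp)
    simp at this
    exact this
  -- All the functions involved factor through the single finite-valued map `F`.
  let F : S → (W → ι) × (W → ι) := fun s => (fun w => ψ w (a w * s), fun w => ψ w s)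
  have hzero : ∑ y, μ {s | F s = y} * ∑ w, (h (y.1 w) - h (y.2 w)) = 0 := by
    simp_rw [Finset.mul_sum]
    rw [Finset.sum_comm]
    refine Finset.sum_eq_zero fun w _ => ?_
    simp_rw [mul_sub]
    rw [Finset.sum_sub_distrib, fibre_sum_comp hadd F (fun y => y.1 w) h,
      fibre_sum_comp hadd F (fun y => y.2 w) h, sub_eq_zero]
    refine Finset.sum_congr rfl fun k _ => ?_
    congr 1
    exact hinv (a w) {s | ψ w s = k}
  have hG : ∀ y, μ {s | F s = y} = 0 ∨ 0 < ∑ w, (h (y.1 w) - h (y.2 w)) := by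
    intro y
    rcases Set.eq_empty_or_nonempty {s | F s = y} with he | ⟨s, rfl⟩
    · exact Or.inl (he ▸ h0)
    · exact Or.inr (hpos s)
  have hall : ∀ y, μ {s | F s = y} = 0 := by
    intro y
    have h1 := (Finset.sum_eq_zero_iff_of_nonneg (fun y _ => ?_)).1 hzero y (Finset.mem_univ y)
    · rcases hG y with h2 | h2
      · exact h2
      · exact (mul_eq_zero.1 h1).resolve_right h2.ne'
    · rcases hG y with h2 | h2
      · simp [h2]
      · exact mul_nonneg (h01 _).1 h2.le
  have h1 := fibre_sum hadd F Finset.univ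
  simp [hall, huniv] at h1

/-- Reiter's condition: a left amenable semigroup carries finitely supported probability vectors
that are almost invariant in `ℓ¹` under left translation by finitely many given elements. -/
lemma exists_almost_invariant {S W : Type*} [Semigroup S] [Nonempty S] [DecidableEq S] [Fintype W]
    (hA : IsLeftAmenable S) (a : W → S) {ε : ℝ} (hε : 0 < ε) :
    ∃ p : S →₀ ℝ, (∀ s, 0 ≤ p s) ∧ ∑ s ∈ p.support, p s = 1 ∧
      ∀ w, ∑ s ∈ p.support, |(∑ t ∈ p.support with a w * t = s, p t) - p s| ≤ ε := by
  classical
  let δ : S → lp (fun _ : S => ℝ) 1 := fun s => lp.single 1 s (1 : ℝ)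
  let v : S → W → lp (fun _ : S => ℝ) 1 := fun s w => δ (a w * s) - δ s
  let D := Finsupp.linearCombination ℝ v
  let P : Set (S →₀ ℝ) := {p | (∀ s, 0 ≤ p s) ∧ Finsupp.linearCombination ℝ (fun _ => (1 : ℝ)) p = 1}
  have hP : Convex ℝ P := by
    rintro p ⟨hp, hp'⟩ q ⟨hq, hq'⟩ b c hb hc hbc
    refine ⟨fun s => ?_, ?_⟩
    · simpa using add_nonneg (mul_nonneg hb (hp s)) (mul_nonneg hc (hq s))
    · rw [map_add, map_smul, map_smul, hp', hq']
      simpa using hbc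
  have hC : Convex ℝ (closure (D '' P)) := (hP.linear_image D).closure
  have hmem : (0 : W → lp (fun _ : S => ℝ) 1) ∈ closure (D '' P) := by
    by_contra hnot
    obtain ⟨Λ, u, hu0, hu⟩ := geometric_hahn_banach_point_closed hC isClosed_closure hnot
    rw [map_zero] at hu0
    let φ : W → S → ℝ := fun w s => Λ (Pi.single w (δ s))
    have hφ : ∀ w s, |φ w s| ≤ ‖Λ‖ := by
      intro w s
      refine (Λ.le_opNorm _).trans ?_
      have : ‖(Pi.single w (δ s) : W → lp (fun _ : S => ℝ) 1)‖ ≤ 1 := by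
        rw [pi_norm_le_iff_of_nonneg zero_le_one]
        intro w'
        by_cases hw : w' = w
        · subst hw
          simp [δ, lp.norm_single]
        · simp [hw]
      simpa using mul_le_mul_of_nonneg_left this (norm_nonneg Λ)
    have hv : ∀ s, u < ∑ w, (φ w (a w * s) - φ w s) := by
      intro s
      have h1 := hu (v s) (subset_closure ⟨Finsupp.single s 1, ⟨fun t => ?_, by simp⟩, by simp [D]⟩)
      · convert h1 using 1
        have : v s = ∑ w, Pi.single w (v s w) := (Finset.univ_sum_single (v s)).symm
        rw [this, map_sum]
        refine Finset.sum_congr rfl fun w _ => ?_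
        simp only [φ, v]
        rw [← map_sub, Pi.single_sub]
      · rw [Finsupp.single_apply]
        split_ifs <;> norm_num
    -- Scaling by `K` makes the errors of the integer parts, less than `1` for each `w`,
    -- negligible against `K * u`.
    obtain ⟨K, hK⟩ := exists_nat_gt ((Fintype.card W : ℝ) / u)
    obtain ⟨N, hN⟩ := exists_nat_gt (K * ‖Λ‖ + 1)
    have hψ : ∀ w s, ⌊(K : ℝ) * φ w s⌋ ∈ Set.Icc (-(N : ℤ)) N := by
      intro w s
      have h1 := abs_le.1 (hφ w s)
      have h2 : (K : ℝ) * φ w s ≤ K * ‖Λ‖ := mul_le_mul_of_nonneg_left h1.2 K.cast_nonneg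
      have h3 : (K : ℝ) * (-‖Λ‖) ≤ K * φ w s := mul_le_mul_of_nonneg_left h1.1 K.cast_nonneg
      have h4 := Int.floor_le ((K : ℝ) * φ w s)
      constructor
      · rw [Int.le_floor]
        push_cast
        linarith
      · have : ((⌊(K : ℝ) * φ w s⌋ : ℤ) : ℝ) ≤ ((N : ℤ) : ℝ) := by
          push_cast
          linarith
        exact_mod_cast this
    refine no_displacement hA a
      (fun w s => (⟨⌊(K : ℝ) * φ w s⌋, hψ w s⟩ : Set.Icc (-(N : ℤ)) N)) (fun i => ((i : ℤ) : ℝ)) ?_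
    intro s
    have h1 : (K : ℝ) * ∑ w, (φ w (a w * s) - φ w s) - Fintype.card W ≤
        ∑ w, (((⌊(K : ℝ) * φ w (a w * s)⌋ : ℤ) : ℝ) - ((⌊(K : ℝ) * φ w s⌋ : ℤ) : ℝ)) := by
      have : (Fintype.card W : ℝ) = ∑ _w : W, (1 : ℝ) := by simp
      rw [this, Finset.mul_sum, ← Finset.sum_sub_distrib]
      refine Finset.sum_le_sum fun w _ => ?_
      have := Int.floor_le ((K : ℝ) * φ w s)
      have := Int.lt_floor_add_one ((K : ℝ) * φ w (a w * s))
      linarith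
    have h2 : (Fintype.card W : ℝ) < K * u := by rwa [div_lt_iff₀ hu0] at hK
    have h3 : (K : ℝ) * u ≤ K * ∑ w, (φ w (a w * s) - φ w s) :=
      mul_le_mul_of_nonneg_left (hv s).le K.cast_nonneg
    exact lt_of_lt_of_le (by linarith) h1
  obtain ⟨_, ⟨p, ⟨hp0, hp1⟩, rfl⟩, hdist⟩ := Metric.mem_closure_iff.1 hmem ε hε
  rw [dist_zero_left] at hdist
  refine ⟨p, hp0, by simpa [Finsupp.linearCombination_apply, Finsupp.sum] using hp1, fun w => ?_⟩
  have h1 : ‖D p w‖ ≤ ε := (norm_le_pi_norm _ w).trans hdist.le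
  have h2 := lp.sum_rpow_le_norm_rpow (p := 1) (by simp) (D p w) p.support
  simp only [ENNReal.toReal_one, Real.rpow_one] at h2
  refine le_trans (le_of_eq ?_) (h2.trans h1)
  refine Finset.sum_congr rfl fun s hs => ?_
  rw [Real.norm_eq_abs]
  congr 1
  have h3 : D p w = ∑ t ∈ p.support, p t • (δ (a w * t) - δ t) := by
    simp [D, Finsupp.linearCombination_apply, Finsupp.sum, v, Finset.sum_apply]
  rw [h3, lp.coeFn_sum, Finset.sum_apply]
  simp only [lp.coeFn_smul, lp.coeFn_sub, Pi.smul_apply, Pi.sub_apply, smul_eq_mul, mul_sub,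
    Finset.sum_sub_distrib, δ, lp.single_apply, Pi.single_apply, mul_ite, mul_one, mul_zero,
    eq_comm (a := s)]
  rw [Finset.sum_filter, Finset.sum_ite_eq' p.support s]
  simp [hs]

lemma min_sum_le {ι : Type*} (B : Finset ι) (f : ι → ℝ) (hf : ∀ i, 0 ≤ f i) {b : ℝ} (hb : 0 ≤ b) :
    min (∑ i ∈ B, f i) b ≤ ∑ i ∈ B, min (f i) b := by
  by_cases h : ∃ i ∈ B, b ≤ f i
  · obtain ⟨i, hi, hbi⟩ := h
    calc min (∑ i ∈ B, f i) b ≤ min (f i) b := by simp [hbi]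
      _ ≤ _ := Finset.single_le_sum (f := fun i => min (f i) b)
        (fun j _ => le_min (hf j) hb) hi
  · push Not at h
    refine (min_le_left _ _).trans (le_of_eq (Finset.sum_congr rfl fun i hi => ?_))
    rw [min_eq_left (h i hi).le]

/-- If `p` is a probability vector whose pushforward under `T` is within `ε` of `p` in `ℓ¹`, then
`√p` nearly attains correlation `1` with its translate. -/
lemma sum_sqrt_ge {S : Type*} [DecidableEq S] (p : S →₀ ℝ) (hp0 : ∀ s, 0 ≤ p s)
    (hp1 : ∑ s ∈ p.support, p s = 1) (T : S → S) {ε : ℝ}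
    (h : ∑ s ∈ p.support, |(∑ t ∈ p.support with T t = s, p t) - p s| ≤ ε) :
    1 - ε ≤ ∑ t ∈ p.support, √(p t) * √(p (T t)) := by
  calc 1 - ε ≤ ∑ s ∈ p.support, (p s - |(∑ t ∈ p.support with T t = s, p t) - p s|) := by
        rw [Finset.sum_sub_distrib, hp1]
        linarith
    _ ≤ ∑ s ∈ p.support, ∑ t ∈ p.support with T t = s, min (p t) (p s) := by
        refine Finset.sum_le_sum fun s _ => le_trans ?_ (min_sum_le _ p hp0 (hp0 s))
        refine le_min ?_ ?_
        · linarith [neg_abs_le ((∑ t ∈ p.support with T t = s, p t) - p s)]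
        · linarith [abs_nonneg ((∑ t ∈ p.support with T t = s, p t) - p s)]
    _ ≤ ∑ s ∈ p.support, ∑ t ∈ p.support with T t = s, √(p t) * √(p (T t)) := by
        refine Finset.sum_le_sum fun s _ => Finset.sum_le_sum fun t ht => ?_
        rw [(Finset.mem_filter.1 ht).2, ← Real.sqrt_mul (hp0 t)]
        refine Real.le_sqrt_of_sq_le ?_
        rw [sq]
        exact mul_le_mul (min_le_left _ _) (min_le_right _ _) (le_min (hp0 t) (hp0 s)) (hp0 t)
    _ ≤ _ := by
        -- The points of the support that `T` sends out of it are dropped on the left.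
        rw [Finset.sum_fiberwise_eq_sum_filter]
        exact Finset.sum_le_sum_of_subset_of_nonneg (Finset.filter_subset _ _)
          fun _ _ _ => by positivity

/-- The positive powers of a Markov operator are averages of left translations by finitely many elements
of `S`. -/
lemma pow_eq_average {X : Type} {S : Type*} [Semigroup S] [Fintype X] [Nonempty X]
    [DecidableEq (WithOne S)] (π : FreeSemigroup X →ₙ* S)
    (M : lp (fun _ : WithOne S => ℝ) 2 →L[ℝ] lp (fun _ : WithOne S => ℝ) 2)
    (hM : IsLeftMarkovOperator π M) (n : ℕ) (hn : 1 ≤ n) :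
    ∃ (W : Type) (_ : Fintype W) (_ : Nonempty W) (a : W → S), ∀ t : WithOne S,
      (M ^ n) (lp.single 2 t (1 : ℝ)) =
        (Fintype.card W : ℝ)⁻¹ • ∑ w, lp.single 2 ((a w : WithOne S) * t) (1 : ℝ) := by
  have h1 : ∀ t : WithOne S, M (lp.single 2 t (1 : ℝ)) = (Fintype.card X : ℝ)⁻¹ •
      ∑ x, lp.single 2 ((π (FreeSemigroup.of x) : WithOne S) * t) (1 : ℝ) := by
    intro t
    ext s
    rw [hM t s, lp.coeFn_smul, Pi.smul_apply, lp.coeFn_sum, Finset.sum_apply, div_eq_inv_mul,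
      smul_eq_mul]
    congr 1
    simp only [lp.single_apply, Pi.single_apply, Nat.card_eq_fintype_card, Fintype.card_subtype,
      Finset.sum_boole, eq_comm (a := s)]
  induction n, hn using Nat.le_induction with
  | base => exact ⟨X, inferInstance, inferInstance, fun x => π (FreeSemigroup.of x), by simpa⟩
  | succ n hn ih =>
    obtain ⟨W, _, _, a, ha⟩ := ih
    refine ⟨W × X, inferInstance, inferInstance,
      fun y => π (FreeSemigroup.of y.2) * a y.1, fun t => ?_⟩
    rw [pow_succ', mul_apply_eq_comp, ha, map_smul, map_sum]
    simp_rw [h1]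
    rw [← Finset.smul_sum, smul_smul, Fintype.sum_prod_type, Fintype.card_prod, Nat.cast_mul,
      mul_inv]
    simp_rw [WithOne.coe_mul, mul_assoc]

theorem stmt7 {X : Type} {S : Type*} [Semigroup S] [Fintype X] [Nonempty X]
    [DecidableEq (WithOne S)]
    (π : FreeSemigroup X →ₙ* S) (hπ : Function.Surjective π)
    (hA : IsLeftAmenable S)
    (M : lp (fun _ : WithOne S => ℝ) 2 →L[ℝ] lp (fun _ : WithOne S => ℝ) 2)
    (hM : IsLeftMarkovOperator π M) :
    ∀ n : ℕ, 1 ≤ n → 1 ≤ ‖M ^ n‖ := by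
  classical
  intro n hn
  obtain ⟨W, _, _, a, ha⟩ := pow_eq_average π M hM n hn
  have : Nonempty S := ⟨π (FreeSemigroup.of (Classical.arbitrary X))⟩
  refine le_of_forall_sub_le fun ε hε => ?_
  obtain ⟨p, hp0, hp1, hp⟩ := exists_almost_invariant hA a hε
  let δ : WithOne S → lp (fun _ : WithOne S => ℝ) 2 := fun t => lp.single 2 t (1 : ℝ)
  let g : lp (fun _ : WithOne S => ℝ) 2 := ∑ t ∈ p.support, √(p t) • δ t
  have hg : ∀ s : S, inner ℝ (δ s) g = √(p s) := by
    intro s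
    have : (g : ∀ _ : WithOne S, ℝ) s = √(p s) := by
      simp only [g, lp.coeFn_sum, Finset.sum_apply, lp.coeFn_smul, Pi.smul_apply, δ,
        lp.single_apply, Pi.single_apply, smul_eq_mul, mul_ite, mul_one, mul_zero,
        WithOne.coe_inj, Finset.sum_ite_eq]
      by_cases hs : p s = 0 <;> simp [hs]
    simp only [δ]
    rw [lp.inner_single_left, this]
    simp
  have hgg : inner ℝ g g = 1 := by
    have : inner ℝ g g = inner ℝ (∑ t ∈ p.support, √(p t) • δ t) g := rfl
    rw [this, sum_inner, ← hp1]
    refine Finset.sum_congr rfl fun t _ => ?_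
    rw [real_inner_smul_left, hg, Real.mul_self_sqrt (hp0 t)]
  have hnorm : ‖g‖ = 1 := by
    rw [real_inner_self_eq_norm_sq] at hgg
    exact (pow_eq_one_iff_of_nonneg (norm_nonneg g) two_ne_zero).1 hgg
  have hMg : inner ℝ ((M ^ n) g) g =
      (Fintype.card W : ℝ)⁻¹ * ∑ w, ∑ t ∈ p.support, √(p t) * √(p (a w * t)) := by
    have h1 : (M ^ n) g = ∑ t ∈ p.support, √(p t) • (Fintype.card W : ℝ)⁻¹ •
        ∑ w, δ ((a w * t : S) : WithOne S) := by
      simp only [g, map_sum, map_smul, δ, ha, WithOne.coe_mul]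
    rw [h1, sum_inner, Finset.sum_comm, Finset.mul_sum]
    refine Finset.sum_congr rfl fun t _ => ?_
    rw [real_inner_smul_left, real_inner_smul_left, sum_inner, ← Finset.mul_sum]
    simp_rw [hg]
    ring
  have hcard : (0 : ℝ) < Fintype.card W := by exact_mod_cast Fintype.card_pos
  calc 1 - ε = (Fintype.card W : ℝ)⁻¹ * ∑ _w : W, (1 - ε) := by
        rw [Finset.sum_const, Finset.card_univ, nsmul_eq_mul, inv_mul_cancel_left₀ hcard.ne']
    _ ≤ inner ℝ ((M ^ n) g) g := by
        rw [hMg]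
        gcongr with w
        exact sum_sqrt_ge p hp0 hp1 (fun t => a w * t) (hp w)
    _ ≤ ‖(M ^ n) g‖ * ‖g‖ := real_inner_le_norm _ _
    _ ≤ ‖M ^ n‖ * ‖g‖ * ‖g‖ := by gcongr; exact (M ^ n).le_opNorm g
    _ = ‖M ^ n‖ := by rw [hnorm]; ring
end

section
/- Let G be a group with a finite symmetric choice of generators X via π : X⁺ → G. Then the following are equivalent: (i) G is amenable; (ii) γ^{G,X} = |X|; (iii) λ^{G,X}_g = |X| for some g ∈ G; (iv) λ^{G,X}_g = |X| for all g ∈ G. -/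
/-!
This is Kesten's criterion for amenability. Write `d` for the number of generators and let
`M = ∑ₓ T(x)` act on `ℓ²(G)` by left translations. Then `p n = Mⁿ δ₁` records the number of words
of length `n` with each value, so its coordinates are the local cogrowth functions. As the
generators are symmetric, `M` is self-adjoint; as right translations commute with `M`, the number of
words of length `2 * n` with value `g` is at most `‖p n‖²`, with equality at `g = 1`. Pairs `(u, v)`
counted by `γ` become words `u v⁻¹` for `1`, hence `γ(n) ≤ n λ₁(n)`. All rates are therefore governed
by the growth of `‖p n‖²`.

If `‖p n‖²` is not bounded by `C r²ⁿ` for some `r < d`, then `‖M (p n)‖ / ‖p n‖` comes arbitrarily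
close to `d`. Since `∑ ‖T(x) f - T(y) f‖² = 2 (d² ‖f‖² - ‖M f‖²)`, the unit vectors `f` along
`p n` satisfy `T(x) f ≈ T(y) f` for all generators `x, y` (`Kesten.exists_almost_invariant`). An
ultrafilter limit of the measures with density `f²` is invariant under all products of two
generators, and averaging it with one translate makes it invariant
(`Kesten.amenable_of_large`).

Conversely, Hall's marriage theorem turns a failure of Følner's condition into a paradoxical
decomposition, which no invariant measure permits (`Kesten.exists_folner`). The indicator `f` of a
Følner set satisfies `‖M f‖ ≥ r ‖f‖` for a given `r < d`, and log-convexity of `n ↦ ‖Mⁿ f‖` gives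
`‖Mⁿ f‖ ≥ rⁿ ‖f‖` for all `n`. As `f` is a finite sum of point masses, `‖p n‖` is bounded below by a
constant times `rⁿ` (`Kesten.large_of_amenable`).
-/

open Filter

/-- The local cogrowth function at `s`. -/
noncomputable def lambdaFn {X : Type} {S : Type*} [Mul S]
    (π : FreeSemigroup X →ₙ* S) (s : S) (n : ℕ) : ℕ :=
  Nat.card {w : FreeSemigroup X // w.length = n ∧ π w = s}

/-- The local cogrowth rate at `s`. -/
noncomputable def lambdaRate {X : Type} {S : Type*} [Mul S]
    (π : FreeSemigroup X →ₙ* S) (s : S) : ℝ :=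
  Filter.atTop.limsup (fun n : ℕ => (lambdaFn π s n : ℝ) ^ (1 / (n : ℝ)))

/-- The choice of generators `π` for the group `G` is symmetric: there is an involution
of `X` matching each generator with a generator representing the inverse element. -/
def IsSymmetricChoice {X : Type} {G : Type*} [Group G]
    (π : FreeSemigroup X →ₙ* G) : Prop :=
  ∃ σ : X → X, (∀ x, σ (σ x) = x) ∧
    ∀ x, π (FreeSemigroup.of (σ x)) = (π (FreeSemigroup.of x))⁻¹

/-- `G` is an amenable group: there is a left-invariant finitely additive probability
measure on the subsets of `G`. -/
def IsAmenableGroup (G : Type*) [Group G] : Prop :=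
  ∃ μ : Set G → ℝ,
    (∀ A : Set G, 0 ≤ μ A ∧ μ A ≤ 1) ∧
    μ Set.univ = 1 ∧
    (∀ A B : Set G, Disjoint A B → μ (A ∪ B) = μ A + μ B) ∧
    (∀ (g : G) (T : Set G), μ ((fun t => g * t) '' T) = μ T)

/-! ### Translations of square-summable functions -/

namespace Kesten

open scoped RealInnerProductSpace

/-- The real Hilbert space `ℓ²(G)`. -/
abbrev L2 (G : Type*) := lp (fun _ : G => ℝ) 2

section Hilbert

variable {G : Type*}

lemma memℓp_two_iff (f : G → ℝ) :
    Memℓp f 2 ↔ Summable fun g => f g ^ 2 := by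
  rw [memℓp_gen_iff (by norm_num)]
  simp

lemma summable_sq (f : L2 G) : Summable fun g => f g ^ 2 :=
  (memℓp_two_iff _).1 (lp.memℓp f)

lemma norm_sq_eq (f : L2 G) : ‖f‖ ^ 2 = ∑' g, f g ^ 2 := by
  rw [← real_inner_self_eq_norm_sq, lp.inner_eq_tsum]
  simp [pow_two]

/-- The operator on `ℓ²(G)` that composes functions with the permutation `e`. -/
noncomputable def perm (e : G ≃ G) : L2 G →ₗ[ℝ] L2 G where
  toFun f := ⟨fun g => f (e g), (memℓp_two_iff _).2
    ((e.summable_iff (f := fun g => f g ^ 2)).2 (summable_sq f))⟩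
  map_add' f h := by ext g; rfl
  map_smul' c f := by ext g; rfl

@[simp] lemma perm_apply (e : G ≃ G) (f : L2 G) (g : G) : perm e f g = f (e g) := rfl

lemma inner_perm_left (e : G ≃ G) (f h : L2 G) :
    ⟪perm e f, h⟫ = ⟪f, perm e.symm h⟫ := by
  rw [lp.inner_eq_tsum, lp.inner_eq_tsum, ← e.tsum_eq (fun g => ⟪f g, perm e.symm h g⟫)]
  simp

@[simp] lemma norm_perm (e : G ≃ G) (f : L2 G) : ‖perm e f‖ = ‖f‖ := by
  rw [← sq_eq_sq₀ (norm_nonneg _) (norm_nonneg _), norm_sq_eq, norm_sq_eq]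
  exact e.tsum_eq (fun g => f g ^ 2)

/-- Restriction of a square-summable function to the set `A`, extended by zero. -/
noncomputable def restr (A : Set G) : L2 G →ₗ[ℝ] L2 G where
  toFun f := ⟨A.indicator f, (memℓp_two_iff _).2 (by
    refine ((summable_sq f).indicator A).congr fun g => ?_
    by_cases h : g ∈ A <;> simp [h])⟩
  map_add' f h := by ext g; exact congrFun (Set.indicator_add A f h) g
  map_smul' c f := by ext g; exact congrFun (Set.indicator_const_smul A c f) g

lemma restr_apply (A : Set G) (f : L2 G) (g : G) : restr A f g = A.indicator f g := rfl

lemma norm_restr_sq (A : Set G) (f : L2 G) :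
    ‖restr A f‖ ^ 2 = ∑' g, A.indicator (fun g => f g ^ 2) g := by
  rw [norm_sq_eq]
  refine tsum_congr fun g => ?_
  by_cases h : g ∈ A <;> simp [restr_apply, h]

lemma norm_restr_le (A : Set G) (f : L2 G) : ‖restr A f‖ ≤ ‖f‖ := by
  rw [← sq_le_sq₀ (norm_nonneg _) (norm_nonneg _), norm_restr_sq, norm_sq_eq]
  refine Summable.tsum_le_tsum (fun g => ?_) ((summable_sq f).indicator A) (summable_sq f)
  exact Set.indicator_le_self' (fun _ _ => sq_nonneg _) g

lemma norm_restr_univ (f : L2 G) : ‖restr Set.univ f‖ = ‖f‖ := by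
  congr 1; ext g; simp [restr_apply]

lemma norm_restr_union {A B : Set G} (h : Disjoint A B) (f : L2 G) :
    ‖restr (A ∪ B) f‖ ^ 2 = ‖restr A f‖ ^ 2 + ‖restr B f‖ ^ 2 := by
  rw [norm_restr_sq, norm_restr_sq, norm_restr_sq,
    ← ((summable_sq f).indicator A).tsum_add ((summable_sq f).indicator B)]
  exact tsum_congr fun g => congrFun (Set.indicator_union_of_disjoint h _) g

open scoped Classical in
/-- The indicator function of the single element `g`. -/
noncomputable def δ (g : G) : L2 G := lp.single 2 g 1

lemma δ_apply [DecidableEq G] (g h : G) : δ g h = if h = g then 1 else 0 := by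
  by_cases hg : h = g
  · subst hg
    simp [δ]
  · simp [δ, hg]

open scoped Classical in
lemma inner_δ (f : L2 G) (g : G) : ⟪f, δ g⟫ = f g := by
  rw [δ, lp.inner_single_right]; simp

/-- The map `A ↦ ‖restr A f‖²` changes little when `f` does. -/
lemma abs_norm_restr_sub_le (A : Set G) (f h : L2 G) :
    |‖restr A f‖ ^ 2 - ‖restr A h‖ ^ 2| ≤ ‖f - h‖ * (‖f‖ + ‖h‖) := by
  rw [sq_sub_sq, abs_mul, mul_comm]
  refine mul_le_mul ?_ ?_ (abs_nonneg _) (norm_nonneg _)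
  · refine (abs_norm_sub_norm_le _ _).trans ?_
    rw [← map_sub]
    exact norm_restr_le _ _
  · rw [abs_of_nonneg (by positivity)]
    exact add_le_add (norm_restr_le _ _) (norm_restr_le _ _)

variable [Group G]

/-- Left translation `(T k f)(g) = f (k⁻¹ g)`. -/
noncomputable def T (k : G) : L2 G →ₗ[ℝ] L2 G := perm (Equiv.mulLeft k⁻¹)

@[simp] lemma T_apply (k : G) (f : L2 G) (g : G) : T k f g = f (k⁻¹ * g) := rfl

@[simp] lemma norm_T (k : G) (f : L2 G) : ‖T k f‖ = ‖f‖ := norm_perm _ _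

lemma inner_T_left (k : G) (f h : L2 G) : ⟪T k f, h⟫ = ⟪f, T k⁻¹ h⟫ := by
  rw [T, inner_perm_left]; rfl

lemma norm_restr_image (k : G) (A : Set G) (f : L2 G) :
    ‖restr ((fun t => k * t) '' A) f‖ = ‖restr A (T k⁻¹ f)‖ := by
  rw [← norm_T k⁻¹]
  congr 1
  ext g
  simp only [T_apply, restr_apply, inv_inv]
  by_cases h : g ∈ A <;> simp [h]

variable {X : Type} [Fintype X]

/-- The unnormalised Markov operator `f ↦ ∑ₓ f (s(x)⁻¹ ·)` attached to a finite family `s`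
of group elements. -/
noncomputable def M (s : X → G) : L2 G →ₗ[ℝ] L2 G := ∑ x, T (s x)

lemma M_apply (s : X → G) (f : L2 G) : M s f = ∑ x, T (s x) f := by
  simp [M]

lemma M_coe (s : X → G) (f : L2 G) (g : G) : M s f g = ∑ x, f ((s x)⁻¹ * g) := by
  rw [M_apply, lp.coeFn_sum, Finset.sum_apply]
  rfl

lemma inner_M {s : X → G} {σ : X → X} (hσ : Function.Involutive σ)
    (hs : ∀ x, s (σ x) = (s x)⁻¹) (f h : L2 G) : ⟪M s f, h⟫ = ⟪f, M s h⟫ := by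
  rw [M_apply, M_apply, sum_inner, inner_sum,
    ← Equiv.sum_comp (hσ.toPerm σ) (fun x => ⟪f, T (s x) h⟫)]
  refine Finset.sum_congr rfl fun x _ => ?_
  rw [inner_T_left, ← hs]; rfl

lemma inner_M_pow {s : X → G} {σ : X → X} (hσ : Function.Involutive σ)
    (hs : ∀ x, s (σ x) = (s x)⁻¹) (n : ℕ) (f h : L2 G) :
    ⟪(M s ^ n) f, h⟫ = ⟪f, (M s ^ n) h⟫ := by
  induction n generalizing f h with
  | zero => simp
  | succ n ih =>
    rw [pow_succ, Module.End.mul_apply, ih, inner_M hσ hs, ← Module.End.mul_apply, ← pow_succ',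
      pow_succ]

/-- Left and right translations commute. -/
lemma M_pow_perm (s : X → G) (n : ℕ) (k : G) (f : L2 G) :
    (M s ^ n) (perm (Equiv.mulRight k) f) = perm (Equiv.mulRight k) ((M s ^ n) f) := by
  induction n with
  | zero => simp
  | succ n ih =>
    rw [pow_succ', Module.End.mul_apply, ih, Module.End.mul_apply]
    ext g
    simp [M_coe, mul_assoc]

open scoped Classical in
lemma δ_eq_perm (g : G) : δ g = perm (Equiv.mulRight g⁻¹) (δ (1 : G)) := by
  ext h
  rw [perm_apply, δ_apply, δ_apply]
  exact if_congr (by simp [mul_inv_eq_one]) rfl rfl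

/-- The function counting the words of length `n` over the family `s` with a given value. -/
noncomputable def p (s : X → G) (n : ℕ) : L2 G := (M s ^ n) (δ 1)

lemma M_pow_δ (s : X → G) (n : ℕ) (g : G) :
    (M s ^ n) (δ g) = perm (Equiv.mulRight g⁻¹) (p s n) := by
  rw [δ_eq_perm, M_pow_perm, p]

lemma p_succ (s : X → G) (n : ℕ) : p s (n + 1) = M s (p s n) := by
  rw [p, pow_succ', Module.End.mul_apply, p]

lemma p_even {s : X → G} {σ : X → X} (hσ : Function.Involutive σ)
    (hs : ∀ x, s (σ x) = (s x)⁻¹) (n : ℕ) (g : G) :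
    p s (2 * n) g = ⟪p s n, perm (Equiv.mulRight g⁻¹) (p s n)⟫ := by
  rw [← inner_δ, ← M_pow_δ, ← inner_M_pow hσ hs, p, p, two_mul, pow_add, Module.End.mul_apply]

lemma p_even_one {s : X → G} {σ : X → X} (hσ : Function.Involutive σ)
    (hs : ∀ x, s (σ x) = (s x)⁻¹) (n : ℕ) : p s (2 * n) 1 = ‖p s n‖ ^ 2 := by
  rw [p_even hσ hs, ← real_inner_self_eq_norm_sq]
  congr 1
  ext g
  simp

lemma p_even_le {s : X → G} {σ : X → X} (hσ : Function.Involutive σ)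
    (hs : ∀ x, s (σ x) = (s x)⁻¹) (n : ℕ) (g : G) : p s (2 * n) g ≤ ‖p s n‖ ^ 2 := by
  rw [p_even hσ hs]
  refine (real_inner_le_norm _ _).trans_eq ?_
  rw [norm_perm, pow_two]

lemma p_odd_le {s : X → G} {σ : X → X} (hσ : Function.Involutive σ)
    (hs : ∀ x, s (σ x) = (s x)⁻¹) (n : ℕ) (g : G) :
    p s (2 * n + 1) g ≤ Fintype.card X * ‖p s n‖ ^ 2 := by
  rw [p_succ, M_coe]
  refine (Finset.sum_le_card_nsmul _ _ (‖p s n‖ ^ 2) fun x _ => p_even_le hσ hs n _).trans_eq ?_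
  simp

lemma sum_norm_T_sub_sq (s : X → G) (f : L2 G) :
    ∑ x, ∑ y, ‖T (s x) f - T (s y) f‖ ^ 2
      = 2 * ((Fintype.card X : ℝ) ^ 2 * ‖f‖ ^ 2 - ‖M s f‖ ^ 2) := by
  have h : ‖M s f‖ ^ 2 = ∑ x, ∑ y, ⟪T (s x) f, T (s y) f⟫ := by
    rw [← real_inner_self_eq_norm_sq, M_apply, sum_inner]
    simp_rw [inner_sum]
  rw [h]
  simp_rw [norm_sub_sq_real, norm_T, Finset.sum_add_distrib, Finset.sum_sub_distrib,
    ← Finset.mul_sum]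
  simp
  ring

end Hilbert

/-! ### Counting words -/

section Counting

variable {G : Type*} [Group G] {X : Type} [Fintype X]

lemma finite_words (n : ℕ) (P : List X → Prop) : Finite {l : List X // l.length = n ∧ P l} :=
  ((List.finite_length_eq X n).subset fun _ h => h.1).to_subtype

lemma card_lists (s : X → G) (n : ℕ) (g : G) :
    (Nat.card {l : List X // l.length = n ∧ (l.map s).prod = g} : ℝ) = p s n g := by
  classical
  induction n generalizing g with
  | zero =>
    rw [p, pow_zero, Module.End.one_apply, δ_apply]
    split_ifs with h
    · subst h
      have : Unique {l : List X // l.length = 0 ∧ (l.map s).prod = 1} :=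
        { default := ⟨[], by simp⟩
          uniq := fun l => Subtype.ext (List.length_eq_zero_iff.1 l.2.1) }
      rw [Nat.card_unique, Nat.cast_one]
    · have : IsEmpty {l : List X // l.length = 0 ∧ (l.map s).prod = g} :=
        ⟨fun ⟨l, h0, h1⟩ => h (by rw [← h1, List.length_eq_zero_iff.1 h0]; simp)⟩
      rw [Nat.card_of_isEmpty, Nat.cast_zero]
  | succ n ih =>
    rw [p_succ, M_coe]
    simp_rw [← ih]
    have := fun x => finite_words (X := X) n (fun l => (l.map s).prod = (s x)⁻¹ * g)
    rw [← Nat.cast_sum, ← Nat.card_sigma]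
    congr 1
    refine Nat.card_congr ⟨fun l => match l with
      | ⟨x :: l, h⟩ => ⟨x, l, by simpa using h.1, by
          rw [← h.2]; simp⟩,
      fun q => ⟨q.1 :: q.2.1, by simp [q.2.2.1], by simp [q.2.2.2]⟩, ?_, ?_⟩
    · rintro ⟨_ | ⟨x, l⟩, h⟩
      · simp at h
      · rfl
    · rintro ⟨x, l, h⟩
      rfl

/-- The list of letters of an element of the free semigroup. -/
def letters (w : FreeSemigroup X) : List X := w.head :: w.tail

omit [Fintype X] in
lemma letters_injective : Function.Injective (letters (X := X)) := by
  rintro ⟨a, l⟩ ⟨b, m⟩ h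
  simp only [letters, List.cons.injEq] at h
  exact FreeSemigroup.ext h.1 h.2

omit [Fintype X] in
lemma letters_mul (u v : FreeSemigroup X) : letters (u * v) = letters u ++ letters v := rfl

omit [Fintype X] in
lemma length_letters (u : FreeSemigroup X) : (letters u).length = u.length := rfl

omit [Fintype X] in
lemma prod_letters (π : FreeSemigroup X →ₙ* G) (w : FreeSemigroup X) :
    ((letters w).map fun x => π (FreeSemigroup.of x)).prod = π w := by
  induction w with
  | ih1 x => simp [letters]
  | ih2 x y _ hy => rw [letters_mul, List.map_append, List.prod_append, hy, map_mul]; simp [letters]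

omit [Fintype X] in
lemma mul_injective_of_length {u v u' v' : FreeSemigroup X} (h : u * v = u' * v')
    (hl : u.length = u'.length) : u = u' ∧ v = v' := by
  have h2 := congrArg letters h
  rw [letters_mul, letters_mul] at h2
  obtain ⟨h3, h4⟩ := List.append_inj h2 (by rwa [length_letters, length_letters])
  exact ⟨letters_injective h3, letters_injective h4⟩

lemma finite_length (n : ℕ) (P : FreeSemigroup X → Prop) :
    Finite {w : FreeSemigroup X // w.length = n ∧ P w} := by
  have := finite_words (X := X) n (fun _ => True)
  refine Finite.of_injective
    (fun w : {w : FreeSemigroup X // w.length = n ∧ P w} =>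
      (⟨letters w.1, w.2.1, trivial⟩ : {l : List X // l.length = n ∧ True})) fun u v h => ?_
  exact Subtype.ext (letters_injective (congrArg Subtype.val h))

lemma lambdaFn_eq (π : FreeSemigroup X →ₙ* G) (g : G) {n : ℕ} (hn : 0 < n) :
    (lambdaFn π g n : ℝ) = p (fun x => π (FreeSemigroup.of x)) n g := by
  rw [← card_lists, lambdaFn]
  congr 1
  refine Nat.card_congr (Equiv.ofBijective (fun w => ⟨letters w.1, w.2.1, ?_⟩) ⟨?_, ?_⟩)
  · rw [prod_letters, w.2.2]
  · intro u v h
    exact Subtype.ext (letters_injective (congrArg Subtype.val h))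
  · rintro ⟨_ | ⟨x, l⟩, h1, h2⟩
    · simp at h1; omega
    · refine ⟨⟨⟨x, l⟩, h1, ?_⟩, rfl⟩
      rw [← h2, ← prod_letters]; rfl

lemma lambdaFn_le_pow (π : FreeSemigroup X →ₙ* G) (g : G) (n : ℕ) :
    lambdaFn π g n ≤ Fintype.card X ^ n := by
  rw [lambdaFn, ← card_vector (α := X) n, ← Nat.card_eq_fintype_card]
  refine Nat.card_le_card_of_injective (fun w => (⟨letters w.1, w.2.1⟩ : List.Vector X n)) ?_
  intro u v h
  exact Subtype.ext (letters_injective (congrArg Subtype.val h))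

/-- Appending a fixed word maps words for `1` injectively to words for `g`. -/
lemma lambdaFn_one_le (π : FreeSemigroup X →ₙ* G) (w : FreeSemigroup X) (n : ℕ) :
    lambdaFn π 1 n ≤ lambdaFn π (π w) (n + w.length) := by
  have := finite_length (X := X) (n + w.length) (fun u => π u = π w)
  refine Nat.card_le_card_of_injective
    (fun u => (⟨u.1 * w, by simp [u.2.1], by simp [u.2.2]⟩ :
      {u : FreeSemigroup X // u.length = n + w.length ∧ π u = π w})) fun u v h => ?_
  exact Subtype.ext (mul_injective_of_length (congrArg Subtype.val h) (u.2.1.trans v.2.1.symm)).1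

/-- The formal inverse of a word: the word is reversed and `σ` is applied to its letters. The
reversal is encoded as a homomorphism to the opposite semigroup. -/
def invWord (σ : X → X) (w : FreeSemigroup X) : FreeSemigroup X :=
  (FreeSemigroup.lift (fun x => MulOpposite.op (FreeSemigroup.of (σ x))) w).unop

omit [Fintype X] in
lemma invWord_of (σ : X → X) (x : X) :
    invWord σ (FreeSemigroup.of x) = FreeSemigroup.of (σ x) := rfl

omit [Fintype X] in
lemma invWord_mul (σ : X → X) (u v : FreeSemigroup X) :
    invWord σ (u * v) = invWord σ v * invWord σ u := by
  simp [invWord]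

omit [Fintype X] in
lemma length_invWord (σ : X → X) (w : FreeSemigroup X) : (invWord σ w).length = w.length := by
  induction w with
  | ih1 x => rfl
  | ih2 x y hx hy => rw [invWord_mul, FreeSemigroup.length_mul, hx, hy, FreeSemigroup.length_mul,
      add_comm]

omit [Fintype X] in
lemma invWord_involutive {σ : X → X} (hσ : Function.Involutive σ) :
    Function.Involutive (invWord σ) := by
  intro w
  induction w with
  | ih1 x => rw [invWord_of, invWord_of, hσ]
  | ih2 x y hx hy => rw [invWord_mul, invWord_mul, hx, hy]

omit [Fintype X] in
lemma map_invWord {π : FreeSemigroup X →ₙ* G} {σ : X → X}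
    (hs : ∀ x, π (FreeSemigroup.of (σ x)) = (π (FreeSemigroup.of x))⁻¹) (w : FreeSemigroup X) :
    π (invWord σ w) = (π w)⁻¹ := by
  induction w with
  | ih1 x => exact hs x
  | ih2 x y hx hy => rw [invWord_mul, map_mul, hx, hy, map_mul, mul_inv_rev]

/-- The product `u v⁻¹` of a pair counted by `γ` is a word for `1`, and the pair is recovered from
it once the length of `u` is known. -/
lemma gammaFn_le {π : FreeSemigroup X →ₙ* G} {σ : X → X} (hσ : Function.Involutive σ)
    (hs : ∀ x, π (FreeSemigroup.of (σ x)) = (π (FreeSemigroup.of x))⁻¹) (n : ℕ) :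
    gammaFn π n ≤ n * lambdaFn π 1 n := by
  have := finite_length (X := X) n (fun u => π u = 1)
  rw [lambdaFn, ← Nat.card_fin n, ← Nat.card_prod, gammaFn, Nat.card_fin]
  refine Nat.card_le_card_of_injective
    (fun q => ((⟨q.1.1.length, ?_⟩, ⟨q.1.1 * invWord σ q.1.2, ?_, ?_⟩) :
      Fin n × {w : FreeSemigroup X // w.length = n ∧ π w = 1})) ?_
  · have := q.2.1
    have h2 : 0 < q.1.2.length := Nat.succ_pos _
    omega
  · rw [FreeSemigroup.length_mul, length_invWord, q.2.1]
  · rw [map_mul, map_invWord hs, q.2.2, mul_inv_cancel]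
  · rintro ⟨⟨u, v⟩, h⟩ ⟨⟨u', v'⟩, h'⟩ he
    simp only [Prod.mk.injEq, Fin.mk.injEq, Subtype.mk.injEq] at he
    obtain ⟨h1, h2⟩ := mul_injective_of_length he.2 he.1
    simp [h1, (invWord_involutive hσ).injective h2]

lemma lambdaFn_one_le_gammaFn (π : FreeSemigroup X →ₙ* G) {w : FreeSemigroup X} (hw : π w = 1)
    (n : ℕ) : lambdaFn π 1 n ≤ gammaFn π (n + w.length) := by
  have : Finite {q : FreeSemigroup X × FreeSemigroup X //
      q.1.length + q.2.length = n + w.length ∧ π q.1 = π q.2} := by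
    have := fun k : ℕ => finite_length (X := X) k (fun _ => True)
    refine Finite.of_injective (fun q => ((⟨⟨q.1.1.length, ?_⟩, ⟨q.1.1, rfl, trivial⟩⟩,
        ⟨⟨q.1.2.length, ?_⟩, ⟨q.1.2, rfl, trivial⟩⟩) :
      (Σ k : Fin (n + w.length + 1), {u : FreeSemigroup X // u.length = k ∧ True}) ×
      (Σ k : Fin (n + w.length + 1), {u : FreeSemigroup X // u.length = k ∧ True}))) ?_
    · have := q.2.1; omega
    · have := q.2.1; omega
    · intro q q' h
      have h1 := congrArg (fun z => (z.1.2.1, z.2.2.1)) h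
      exact Subtype.ext h1
  refine Nat.card_le_card_of_injective (fun u => (⟨(u.1, w), by simp [u.2.1], by
    rw [u.2.2, hw]⟩ : {q : FreeSemigroup X × FreeSemigroup X //
      q.1.length + q.2.length = n + w.length ∧ π q.1 = π q.2})) fun u v h => ?_
  exact Subtype.ext (congrArg (fun z => z.1.1) h)

end Counting

/-! ### Exponential growth and invariant means -/

section ToAmenable

variable {G : Type*} [Group G] {X : Type} [Fintype X]

/-- Without a uniform exponential gap, `p s n` is almost an eigenvector of `M s ^ 2` for suitable
`n`. -/
lemma exists_almost_invariant [Nonempty X] {s : X → G}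
    (hbig : ¬ ∃ C r : ℝ, 0 < C ∧ 0 < r ∧ r < Fintype.card X ∧
      ∀ n, ‖p s n‖ ^ 2 ≤ C * r ^ (2 * n)) {ε : ℝ} (hε : 0 < ε) :
    ∃ f : L2 G, ‖f‖ = 1 ∧ ∀ x y, ‖T (s x) f - T (s y) f‖ < ε := by
  set d : ℝ := (Fintype.card X : ℝ) with hd
  have hd1 : 1 ≤ d := by rw [hd]; exact_mod_cast Fintype.card_pos
  -- `η < d²` is needed so that the square root below is a positive number smaller than `d`
  set η : ℝ := min (ε ^ 2 / 2) (1 / 2) with hη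
  have hη0 : 0 < η := by positivity
  have hη1 : η ≤ 1 / 2 := min_le_right _ _
  have hη2 : 2 * η ≤ ε ^ 2 := by have := min_le_left (ε ^ 2 / 2) (1 / 2); linarith
  have hpos : 0 < d ^ 2 - η := by nlinarith
  obtain ⟨n, hn⟩ : ∃ n, (d ^ 2 - η) * ‖p s n‖ ^ 2 < ‖p s (n + 1)‖ ^ 2 := by
    by_contra! hcon
    refine hbig ⟨‖p s 0‖ ^ 2 + 1, Real.sqrt (d ^ 2 - η), by positivity, Real.sqrt_pos.2 hpos,
      (Real.sqrt_lt' (by linarith)).2 (by linarith), fun n => ?_⟩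
    rw [pow_mul, Real.sq_sqrt hpos.le]
    induction n with
    | zero => simp
    | succ n ih =>
      calc _ ≤ _ := hcon n
        _ ≤ (d ^ 2 - η) * _ := mul_le_mul_of_nonneg_left ih hpos.le
        _ = _ := by ring
  have hp0 : p s n ≠ 0 := by
    intro h
    rw [p_succ, h] at hn
    simp at hn
  have hnp : 0 < ‖p s n‖ := norm_pos_iff.2 hp0
  refine ⟨‖p s n‖⁻¹ • p s n, ?_, fun x y => ?_⟩
  · rw [norm_smul, norm_inv, norm_norm, inv_mul_cancel₀ hnp.ne']
  · rw [map_smul, map_smul, ← smul_sub, norm_smul, norm_inv, norm_norm, inv_mul_lt_iff₀ hnp]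
    have h1 := sum_norm_T_sub_sq s (p s n)
    have h2 : ‖T (s x) (p s n) - T (s y) (p s n)‖ ^ 2
        ≤ ∑ x, ∑ y, ‖T (s x) (p s n) - T (s y) (p s n)‖ ^ 2 :=
      (Finset.single_le_sum (f := fun y => ‖T (s x) (p s n) - T (s y) (p s n)‖ ^ 2)
        (fun _ _ => sq_nonneg _) (Finset.mem_univ y)).trans
      (Finset.single_le_sum (f := fun x => ∑ y, ‖T (s x) (p s n) - T (s y) (p s n)‖ ^ 2)
        (fun _ _ => Finset.sum_nonneg fun _ _ => sq_nonneg _) (Finset.mem_univ x))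
    rw [p_succ] at hn
    refine lt_of_pow_lt_pow_left₀ 2 (by positivity) ?_
    rw [mul_pow]
    have h3 := mul_le_mul_of_nonneg_right hη2 (sq_nonneg ‖p s n‖)
    nlinarith

/-- The weak limit of the measures with density `f²`, for `f` almost invariant as above. It is
only invariant under products `s(x) s(y)⁻¹`; averaging with one translate repairs this. -/
lemma amenable_of_large [Nonempty X] {π : FreeSemigroup X →ₙ* G} (hπ : Function.Surjective π)
    {σ : X → X} (hs : ∀ x, π (FreeSemigroup.of (σ x)) = (π (FreeSemigroup.of x))⁻¹)
    (hbig : ¬ ∃ C r : ℝ, 0 < C ∧ 0 < r ∧ r < Fintype.card X ∧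
      ∀ n, ‖p (fun x => π (FreeSemigroup.of x)) n‖ ^ 2 ≤ C * r ^ (2 * n)) :
    IsAmenableGroup G := by
  set s : X → G := fun x => π (FreeSemigroup.of x) with hsdef
  choose f hf1 hf2 using fun k : ℕ =>
    exists_almost_invariant hbig (ε := 1 / ((k : ℝ) + 1)) (by positivity)
  let m : ℕ → Set G → ℝ := fun k A => ‖restr A (f k)‖ ^ 2
  have hm : ∀ (k : ℕ) A, m k A ∈ Set.Icc (0 : ℝ) 1 := fun k A => by
    refine ⟨sq_nonneg _, ?_⟩
    have := norm_restr_le A (f k)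
    rw [hf1] at this
    exact pow_le_one₀ (norm_nonneg _) this
  let U : Ultrafilter ℕ := Filter.hyperfilter ℕ
  have hU : (U : Filter ℕ) ≤ atTop := by
    rw [← Nat.cofinite_eq_atTop]; exact Filter.hyperfilter_le_cofinite
  have hlim : ∀ A, ∃ l ∈ Set.Icc (0 : ℝ) 1, Tendsto (fun k => m k A) U (nhds l) := fun A =>
    isCompact_Icc.ultrafilter_le_nhds' (U.map fun k => m k A)
      (Filter.mem_map.2 (Filter.Eventually.of_forall fun k => hm k A))
  choose ν hν hνlim using hlim
  have huniv : ν Set.univ = 1 := by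
    refine tendsto_nhds_unique (hνlim _) ?_
    simp only [m, norm_restr_univ, hf1]
    simp
  have hadd : ∀ A B : Set G, Disjoint A B → ν (A ∪ B) = ν A + ν B := fun A B h => by
    refine tendsto_nhds_unique (hνlim _) (((hνlim A).add (hνlim B)).congr fun k => ?_)
    exact (norm_restr_union h _).symm
  have hinv : ∀ (x y : X) (A : Set G),
      ν ((fun t => s x * t) '' A) = ν ((fun t => s y * t) '' A) := fun x y A => by
    have h0 : Tendsto (fun k : ℕ => 2 * (1 / ((k : ℝ) + 1))) U (nhds 0) := by
      have := tendsto_one_div_add_atTop_nhds_zero_nat (𝕜 := ℝ)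
      simpa using (this.mono_left hU).const_mul 2
    have h1 : Tendsto (fun k => m k ((fun t => s x * t) '' A) - m k ((fun t => s y * t) '' A))
        U (nhds 0) := by
      refine squeeze_zero_norm (fun k => ?_) h0
      simp only [m]
      rw [norm_restr_image, norm_restr_image, Real.norm_eq_abs]
      refine (abs_norm_restr_sub_le _ _ _).trans ?_
      rw [norm_T, norm_T, hf1]
      have := hf2 k (σ x) (σ y)
      simp only [hsdef, hs] at this ⊢
      linarith
    have := tendsto_nhds_unique h1 ((hνlim _).sub (hνlim _))
    linarith
  have himg : ∀ (g h : G) (A : Set G),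
      (fun t => g * t) '' ((fun t => h * t) '' A) = (fun t => g * h * t) '' A := fun g h A => by
    rw [Set.image_image]; simp only [mul_assoc]
  have hinv2 : ∀ (x y : X) (A : Set G),
      ν ((fun t => s x * t) '' ((fun t => s y * t) '' A)) = ν A := fun x y A => by
    rw [hinv x (σ y), himg]
    simp [hsdef, hs]
  obtain ⟨x₀⟩ := ‹Nonempty X›
  refine ⟨fun A => (ν A + ν ((fun t => s x₀ * t) '' A)) / 2, fun A => ?_, ?_, fun A B h => ?_,
    fun g A => ?_⟩
  · have h1 := hν A
    have h2 := hν ((fun t => s x₀ * t) '' A)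
    constructor <;> linarith [h1.1, h1.2, h2.1, h2.2]
  · have : (fun t => s x₀ * t) '' Set.univ = Set.univ := by
      rw [Set.image_univ]; exact (Equiv.mulLeft (s x₀)).range_eq_univ
    simp only [this, huniv]; norm_num
  · simp only [Set.image_union]
    rw [hadd A B h, hadd _ _ ((Set.disjoint_image_iff (mul_right_injective _)).2 h)]
    ring
  · obtain ⟨w, rfl⟩ := hπ g
    induction w generalizing A with
    | ih1 x =>
      simp only
      rw [show (fun t => π (FreeSemigroup.of x) * t) = fun t => s x * t from rfl, hinv2,
        hinv x x₀, add_comm]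
    | ih2 x w hx hw =>
      rw [map_mul, ← himg, hx, hw]

end ToAmenable

/-! ### Følner sets and lower bounds for return counts -/

section FromAmenable

variable {G : Type*} [Group G]

open scoped Pointwise

omit [Group G] in
/-- A finitely additive measure is finitely additive over finite families. -/
lemma measure_biUnion {ι : Type*} {μ : Set G → ℝ}
    (hadd : ∀ A B : Set G, Disjoint A B → μ (A ∪ B) = μ A + μ B)
    (I : Finset ι) (A : ι → Set G) (hA : (I : Set ι).PairwiseDisjoint A) :
    μ (⋃ i ∈ I, A i) = ∑ i ∈ I, μ (A i) := by
  classical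
  induction I using Finset.induction_on with
  | empty =>
    have := hadd ∅ ∅ (by simp)
    simp at this ⊢
    exact this
  | insert i I hi ih =>
    rw [Finset.set_biUnion_insert, Finset.sum_insert hi, hadd, ih]
    · exact hA.subset (by simp)
    · simp only [Set.disjoint_iUnion_right]
      intro j hj
      exact hA (by simp) (by simp [hj]) (by rintro rfl; exact hi hj)

/-- If every finite set is at least doubled by `K`, Hall's marriage theorem produces a paradoxical
decomposition, which rules out an invariant measure. -/
lemma exists_card_mul_lt [DecidableEq G] (h : IsAmenableGroup G) (K : Finset G) :
    ∃ F : Finset G, (K * F).card < 2 * F.card := by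
  by_contra! hcon
  obtain ⟨μ, hμ, huniv, hadd, hinv⟩ := h
  let t : G × Bool → Finset G := fun q => K * {q.1}
  obtain ⟨φ, hφ, hφt⟩ := (Finset.all_card_le_biUnion_card_iff_exists_injective t).1 fun S => by
    let F := S.image Prod.fst
    calc S.card ≤ (F ×ˢ (Finset.univ : Finset Bool)).card :=
          Finset.card_le_card fun q hq => by
            simp only [Finset.mem_product, Finset.mem_univ, and_true]
            exact Finset.mem_image_of_mem _ hq
      _ = 2 * F.card := by rw [Finset.card_product]; simp [mul_comm]
      _ ≤ (K * F).card := hcon F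
      _ ≤ (S.biUnion t).card := Finset.card_le_card fun g hg => by
          obtain ⟨k, hk, a, ha, rfl⟩ := Finset.mem_mul.1 hg
          obtain ⟨q, hq, rfl⟩ := Finset.mem_image.1 ha
          exact Finset.mem_biUnion.2 ⟨q, hq, Finset.mul_mem_mul hk (by simp)⟩
  -- `A (i, k)` is the set of elements whose `i`-th image is obtained by translating by `k`
  let A : Bool × G → Set G := fun q => {g | φ (g, q.1) = q.2 * g}
  have hcover : ∀ i : Bool, ∑ k ∈ K, μ (A (i, k)) = 1 := fun i => by
    rw [← measure_biUnion hadd K (fun k => A (i, k)), ← huniv]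
    · congr 1
      refine Set.eq_univ_of_forall fun g => ?_
      obtain ⟨k, hk, a, ha, hka⟩ := Finset.mem_mul.1 (hφt (g, i))
      rw [Finset.mem_singleton] at ha
      simp only [Set.mem_iUnion]
      exact ⟨k, hk, by simp only [A, Set.mem_ofPred_eq]; rw [← hka, ha]⟩
    · intro k _ k' _ hkk
      refine Set.disjoint_left.2 fun g hg hg' => hkk ?_
      exact mul_right_cancel (hg.symm.trans hg')
  have himg : ∀ q g, g ∈ (fun t => q.2 * t) '' A q → ∃ a, g = φ (a, q.1) ∧ g = q.2 * a := by
    rintro q g ⟨a, ha, rfl⟩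
    exact ⟨a, ha.symm, rfl⟩
  have hdisj : (((Finset.univ : Finset Bool) ×ˢ K : Finset (Bool × G)) : Set
      (Bool × G)).PairwiseDisjoint (fun q => (fun t => q.2 * t) '' A q) := by
    intro q _ q' _ hqq
    refine Set.disjoint_left.2 fun g hg hg' => hqq ?_
    obtain ⟨a, h1, h2⟩ := himg q g hg
    obtain ⟨b, h3, h4⟩ := himg q' g hg'
    have h5 := hφ (h1.symm.trans h3)
    rw [Prod.mk.injEq] at h5
    refine Prod.ext h5.2 ?_
    rw [← h5.1] at h4
    exact mul_right_cancel (h2.symm.trans h4)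
  have hsum := measure_biUnion hadd _ _ hdisj
  simp_rw [hinv] at hsum
  rw [Finset.sum_product] at hsum
  simp only [hcover] at hsum
  have := (hμ (⋃ q ∈ (Finset.univ : Finset Bool) ×ˢ K, (fun t => q.2 * t) '' A q)).2
  rw [hsum] at this
  norm_num at this

/-- Følner's condition. -/
lemma exists_folner [DecidableEq G] (h : IsAmenableGroup G) (K : Finset G) {ε : ℝ} (hε : 0 < ε) :
    ∃ F : Finset G, ((K * F).card : ℝ) < (1 + ε) * F.card := by
  by_contra! hcon
  obtain ⟨n, hn⟩ := pow_unbounded_of_one_lt (2 : ℝ) (show 1 < 1 + ε by linarith)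
  have hpow : ∀ (m : ℕ) (F : Finset G), (1 + ε) ^ m * F.card ≤ ((K ^ m * F).card : ℝ) := by
    intro m F
    induction m with
    | zero => simp
    | succ m ih =>
      calc (1 + ε) ^ (m + 1) * F.card = (1 + ε) * ((1 + ε) ^ m * F.card) := by ring
        _ ≤ (1 + ε) * (K ^ m * F).card := mul_le_mul_of_nonneg_left ih (by linarith)
        _ ≤ (K * (K ^ m * F)).card := hcon _
        _ = _ := by rw [pow_succ', mul_assoc]
  obtain ⟨F, hF⟩ := exists_card_mul_lt h (K ^ n)
  have h1 := hpow n F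
  have h2 : ((K ^ n * F).card : ℝ) < 2 * F.card := by exact_mod_cast hF
  have h3 : (2 : ℝ) * F.card ≤ (1 + ε) ^ n * F.card := by gcongr
  linarith

variable {X : Type} [Fintype X]

/-- The indicator function of a finite set. -/
noncomputable def ind (F : Finset G) : L2 G := ∑ g ∈ F, δ g

omit [Group G] in
lemma ind_apply [DecidableEq G] (F : Finset G) (g : G) : ind F g = if g ∈ F then 1 else 0 := by
  rw [ind, lp.coeFn_sum, Finset.sum_apply]
  simp [δ_apply]

omit [Group G] in
lemma inner_ind (f : L2 G) (F : Finset G) : inner ℝ f (ind F) = ∑ g ∈ F, f g := by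
  rw [ind, inner_sum]
  simp only [inner_δ]

omit [Group G] in
lemma norm_ind_sq (F : Finset G) : ‖ind F‖ ^ 2 = F.card := by
  classical
  rw [← real_inner_self_eq_norm_sq, inner_ind]
  simp only [ind_apply]
  simp

lemma inner_M_ind [DecidableEq G] (s : X → G) (F : Finset G) {ε : ℝ}
    (hF : ((insert 1 (Finset.univ.image s) * F).card : ℝ) < (1 + ε) * F.card) :
    Fintype.card X * ((1 - ε) * F.card) ≤ inner ℝ (M s (ind F)) (ind F) := by
  rw [M_apply, sum_inner, ← nsmul_eq_mul]
  refine Finset.card_nsmul_le_sum _ _ _ fun x _ => ?_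
  rw [inner_ind]
  have h0 : ∑ g ∈ F, T (s x) (ind F) g = (F.filter (fun g => (s x)⁻¹ * g ∈ F)).card := by
    rw [Finset.card_filter, Nat.cast_sum]
    refine Finset.sum_congr rfl fun g _ => ?_
    rw [T_apply, ind_apply, Nat.cast_ite, Nat.cast_one, Nat.cast_zero]
  rw [h0]
  have h1 : F ∪ F.image (s x * ·) ⊆ insert 1 (Finset.univ.image s) * F := by
    refine Finset.union_subset (fun g hg => ?_) (fun g hg => ?_)
    · exact Finset.mem_mul.2 ⟨1, by simp, g, hg, one_mul g⟩
    · obtain ⟨a, ha, rfl⟩ := Finset.mem_image.1 hg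
      exact Finset.mul_mem_mul (by simp) ha
  have h2 := Finset.card_le_card h1
  have h3 := Finset.card_union_add_card_inter F (F.image (s x * ·))
  rw [Finset.card_image_of_injective _ (mul_right_injective (s x))] at h3
  have h4 : F ∩ F.image (s x * ·) ⊆ F.filter (fun g => (s x)⁻¹ * g ∈ F) := by
    intro g hg
    obtain ⟨hg1, hg2⟩ := Finset.mem_inter.1 hg
    obtain ⟨a, ha, rfl⟩ := Finset.mem_image.1 hg2
    exact Finset.mem_filter.2 ⟨hg1, by simpa using ha⟩
  have h5 := Finset.card_le_card h4
  have h6 : (F.card : ℝ) + F.card ≤ (insert 1 (Finset.univ.image s) * F).card +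
    (F.filter (fun g => (s x)⁻¹ * g ∈ F)).card := by exact_mod_cast (by omega)
  linarith

/-- For a self-adjoint operator, the growth of `‖Mⁿ f‖` is at least the initial one, by
log-convexity. -/
lemma norm_M_pow_ge {s : X → G} {σ : X → X} (hσ : Function.Involutive σ)
    (hs : ∀ x, s (σ x) = (s x)⁻¹) (f : L2 G) {c : ℝ} (hc : 0 < c) (hf : f ≠ 0)
    (h0 : c * ‖f‖ ≤ ‖M s f‖) (n : ℕ) : c ^ n * ‖f‖ ≤ ‖(M s ^ n) f‖ := by
  have hstep : ∀ n, 0 < ‖(M s ^ n) f‖ ∧ c * ‖(M s ^ n) f‖ ≤ ‖(M s ^ (n + 1)) f‖ := by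
    intro n
    induction n with
    | zero => simpa [hf] using h0
    | succ n ih =>
      have hpos : 0 < ‖(M s ^ (n + 1)) f‖ := lt_of_lt_of_le (mul_pos hc ih.1) ih.2
      refine ⟨hpos, ?_⟩
      have hcs : ‖(M s ^ (n + 1)) f‖ ^ 2 ≤ ‖(M s ^ n) f‖ * ‖(M s ^ (n + 1 + 1)) f‖ := by
        rw [← real_inner_self_eq_norm_sq]
        nth_rewrite 1 [pow_succ']
        rw [Module.End.mul_apply, inner_M hσ hs, ← Module.End.mul_apply, ← pow_succ']
        exact real_inner_le_norm _ _
      refine le_of_mul_le_mul_left ?_ ih.1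
      nlinarith [mul_le_mul_of_nonneg_right ih.2 hpos.le]
  induction n with
  | zero => simp
  | succ n ih =>
    calc c ^ (n + 1) * ‖f‖ = c * (c ^ n * ‖f‖) := by ring
      _ ≤ c * ‖(M s ^ n) f‖ := mul_le_mul_of_nonneg_left ih hc.le
      _ ≤ _ := (hstep n).2

lemma norm_M_pow_ind_le (s : X → G) (F : Finset G) (n : ℕ) :
    ‖(M s ^ n) (ind F)‖ ≤ F.card * ‖p s n‖ := by
  rw [ind, map_sum]
  refine (norm_sum_le _ _).trans_eq ?_
  simp [M_pow_δ]

/-- In an amenable group, the number of returns of even length grows faster than `r²ⁿ` for every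
`r` below the number of generators. -/
lemma large_of_amenable [Nonempty X] (h : IsAmenableGroup G) {s : X → G} {σ : X → X}
    (hσ : Function.Involutive σ) (hs : ∀ x, s (σ x) = (s x)⁻¹) {r : ℝ} (hr : 0 < r)
    (hrd : r < Fintype.card X) : ∃ c > 0, ∀ n, c * r ^ (2 * n) ≤ ‖p s n‖ ^ 2 := by
  classical
  have hd : (0 : ℝ) < Fintype.card X := by exact_mod_cast Fintype.card_pos
  -- chosen so that `d (1 - ε) = r`
  obtain ⟨F, hF⟩ := exists_folner h (insert 1 (Finset.univ.image s))
    (ε := 1 - r / Fintype.card X) (by rw [sub_pos, div_lt_one hd]; exact hrd)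
  have hFpos : (0 : ℝ) < F.card := by
    rcases F.eq_empty_or_nonempty with rfl | h
    · simp at hF
    · exact_mod_cast h.card_pos
  have hnorm := norm_ind_sq F
  have hne : ind F ≠ 0 := by
    intro h0
    rw [h0] at hnorm
    simp at hnorm
    linarith
  have hpos : 0 < ‖ind F‖ := norm_pos_iff.2 hne
  have h0 : r * ‖ind F‖ ≤ ‖M s (ind F)‖ := by
    have h1 := (inner_M_ind s F hF).trans (real_inner_le_norm _ _)
    refine le_of_mul_le_mul_right (le_trans (le_of_eq ?_) h1) hpos
    rw [← hnorm]
    field_simp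
    ring
  refine ⟨(‖ind F‖ / F.card) ^ 2, by positivity, fun n => ?_⟩
  have h1 := (norm_M_pow_ge hσ hs _ hr hne h0 n).trans (norm_M_pow_ind_le s F n)
  rw [mul_comm 2 n, pow_mul, ← mul_pow]
  refine pow_le_pow_left₀ (by positivity) ?_ 2
  rw [div_mul_eq_mul_div, div_le_iff₀ hFpos]
  linarith

end FromAmenable

/-! ### Growth rates -/

section Rates

lemma eventually_root_le {u : ℕ → ℕ} {C r r' : ℝ} (hC : 0 < C) (hr : 0 < r) (hrr : r < r')
    (hu : ∀ᶠ n in atTop, (u n : ℝ) ≤ C * n * r ^ n) :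
    ∀ᶠ n : ℕ in atTop, (u n : ℝ) ^ (1 / (n : ℝ)) ≤ r' := by
  have hr' : 0 < r' := hr.trans hrr
  have h1 : Tendsto (fun n : ℕ => (n : ℝ) * (r / r') ^ n) atTop (nhds 0) :=
    tendsto_self_mul_const_pow_of_lt_one (by positivity) ((div_lt_one (by linarith)).2 hrr)
  have h2 := h1.eventually_le_const (show 0 < C⁻¹ by positivity)
  filter_upwards [hu, h2, eventually_gt_atTop 0] with n hn hn2 hn0
  have h3 : (u n : ℝ) ≤ r' ^ n := by
    refine hn.trans ?_
    rw [div_pow, ← mul_div_assoc, div_le_iff₀ (by positivity), inv_mul_eq_div,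
      le_div_iff₀ hC] at hn2
    linarith
  calc (u n : ℝ) ^ (1 / (n : ℝ)) ≤ (r' ^ n) ^ (1 / (n : ℝ)) :=
        Real.rpow_le_rpow (Nat.cast_nonneg _) h3 (by positivity)
    _ = r' := by rw [one_div, Real.pow_rpow_inv_natCast hr'.le hn0.ne']

lemma limsup_root_le {u : ℕ → ℕ} {C r : ℝ} (hC : 0 < C) (hr : 0 < r)
    (hu : ∀ᶠ n in atTop, (u n : ℝ) ≤ C * n * r ^ n) :
    atTop.limsup (fun n : ℕ => (u n : ℝ) ^ (1 / (n : ℝ))) ≤ r := by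
  refine le_of_forall_gt_imp_ge_of_dense fun r' hr' => ?_
  refine limsup_le_of_le ?_ (eventually_root_le hC hr hr' hu)
  exact IsBoundedUnder.isCoboundedUnder_le
    (isBoundedUnder_of ⟨0, fun n => by positivity⟩)

lemma le_limsup_root {u : ℕ → ℕ} {C r c q : ℝ} (hC : 0 < C) (hr : 0 < r)
    (hu : ∀ᶠ n in atTop, (u n : ℝ) ≤ C * n * r ^ n) (hc : 0 < c) (hq : 0 < q)
    (hl : ∃ᶠ n in atTop, c * q ^ n ≤ (u n : ℝ)) :
    q ≤ atTop.limsup (fun n : ℕ => (u n : ℝ) ^ (1 / (n : ℝ))) := by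
  refine le_of_forall_lt_imp_le_of_dense fun q' hq' => ?_
  refine le_limsup_of_frequently_le ?_
    ⟨r + 1, eventually_map.2 (eventually_root_le hC hr (lt_add_one r) hu)⟩
  rcases le_or_gt q' 0 with h0 | h0
  · exact (Eventually.of_forall fun n => h0.trans (by positivity)).frequently
  have h1 : Tendsto (fun n : ℕ => (q' / q) ^ n) atTop (nhds 0) :=
    tendsto_pow_atTop_nhds_zero_of_lt_one (by positivity) ((div_lt_one hq).2 hq')
  have h2 := h1.eventually_le_const hc
  refine (hl.and_eventually (h2.and (eventually_gt_atTop 0))).mono fun n hn => ?_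
  obtain ⟨hn, hn2, hn0⟩ := hn
  rw [div_pow, div_le_iff₀ (by positivity)] at hn2
  calc q' = (q' ^ n) ^ (1 / (n : ℝ)) := by rw [one_div, Real.pow_rpow_inv_natCast h0.le hn0.ne']
    _ ≤ _ := Real.rpow_le_rpow (by positivity) (hn2.trans hn) (by positivity)

variable {G : Type*} [Group G] {X : Type} [Fintype X] [Nonempty X]

/-- If the return counts of even length have a smaller exponential rate, so do all local cogrowth
functions. -/
lemma lambdaFn_le_of_gap {π : FreeSemigroup X →ₙ* G} {σ : X → X} (hσ : Function.Involutive σ)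
    (hs : ∀ x, π (FreeSemigroup.of (σ x)) = (π (FreeSemigroup.of x))⁻¹) {C r : ℝ} (hC : 0 < C)
    (hr : 0 < r)
    (h : ∀ n, ‖p (fun x => π (FreeSemigroup.of x)) n‖ ^ 2 ≤ C * r ^ (2 * n)) :
    ∃ D > 0, ∀ g, ∀ n > 0, (lambdaFn π g n : ℝ) ≤ D * r ^ n := by
  refine ⟨C + Fintype.card X * C / r, by positivity, fun g n hn => ?_⟩
  rw [lambdaFn_eq π g hn]
  obtain ⟨m, rfl | rfl⟩ := Nat.even_or_odd' n
  · refine ((p_even_le hσ hs m g).trans (h m)).trans ?_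
    gcongr
    exact le_add_of_nonneg_right (by positivity)
  · refine (p_odd_le hσ hs m g).trans ?_
    calc Fintype.card X * ‖p (fun x => π (FreeSemigroup.of x)) m‖ ^ 2
        ≤ Fintype.card X * (C * r ^ (2 * m)) := by gcongr; exact h m
      _ = (Fintype.card X * C / r) * r ^ (2 * m + 1) := by rw [pow_succ]; field_simp
      _ ≤ _ := by
        gcongr
        exact le_add_of_nonneg_left hC.le

lemma lambdaFn_le_card (π : FreeSemigroup X →ₙ* G) (g : G) :
    ∀ᶠ n : ℕ in atTop, (lambdaFn π g n : ℝ) ≤ 1 * n * (Fintype.card X : ℝ) ^ n := by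
  filter_upwards [eventually_gt_atTop 0] with n hn
  have h1 : (lambdaFn π g n : ℝ) ≤ (Fintype.card X : ℝ) ^ n := by
    exact_mod_cast lambdaFn_le_pow π g n
  have h2 : (1 : ℝ) ≤ n := by exact_mod_cast hn
  refine h1.trans (le_mul_of_one_le_left (by positivity) (by linarith))

omit [Nonempty X] in
lemma gammaFn_le_card {π : FreeSemigroup X →ₙ* G} {σ : X → X} (hσ : Function.Involutive σ)
    (hs : ∀ x, π (FreeSemigroup.of (σ x)) = (π (FreeSemigroup.of x))⁻¹) :
    ∀ᶠ n : ℕ in atTop, (gammaFn π n : ℝ) ≤ 1 * n * (Fintype.card X : ℝ) ^ n := by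
  refine Eventually.of_forall fun n => ?_
  rw [one_mul]
  exact_mod_cast (gammaFn_le hσ hs n).trans (Nat.mul_le_mul_left n (lambdaFn_le_pow π 1 n))

/-- When the group is amenable, a function that dominates a shift of the return counts and is
trivially bounded has the number of generators as its exponential growth rate. -/
lemma rate_eq_of_amenable (hG : IsAmenableGroup G) {π : FreeSemigroup X →ₙ* G} {σ : X → X}
    (hσ : Function.Involutive σ)
    (hs : ∀ x, π (FreeSemigroup.of (σ x)) = (π (FreeSemigroup.of x))⁻¹) {u : ℕ → ℕ} {k : ℕ}
    (hu : ∀ n, lambdaFn π 1 n ≤ u (n + k))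
    (hu' : ∀ᶠ n : ℕ in atTop, (u n : ℝ) ≤ 1 * n * (Fintype.card X : ℝ) ^ n) :
    atTop.limsup (fun n : ℕ => (u n : ℝ) ^ (1 / (n : ℝ))) = Fintype.card X := by
  have hd : (0 : ℝ) < Fintype.card X := by exact_mod_cast Fintype.card_pos
  refine le_antisymm (limsup_root_le one_pos hd hu') ?_
  refine le_of_forall_lt_imp_le_of_dense fun r hrd => ?_
  -- a positive rate is needed to apply the lower bounds
  refine (le_max_left r (Fintype.card X / 2)).trans ?_
  set q : ℝ := max r (Fintype.card X / 2) with hq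
  have hq0 : 0 < q := lt_max_of_lt_right (by positivity)
  have hqd : q < Fintype.card X := max_lt hrd (by linarith)
  obtain ⟨c, hc, h⟩ := large_of_amenable hG (s := fun x => π (FreeSemigroup.of x)) hσ hs hq0 hqd
  refine le_limsup_root one_pos hd hu' (c := c / q ^ k) (by positivity) hq0 ?_
  refine frequently_atTop.2 fun N => ⟨2 * (N + 1) + k, by omega, ?_⟩
  calc c / q ^ k * q ^ (2 * (N + 1) + k) = c * q ^ (2 * (N + 1)) := by
        rw [pow_add]; field_simp
    _ ≤ _ := h _
    _ = lambdaFn π 1 (2 * (N + 1)) := by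
        rw [lambdaFn_eq π 1 (by omega), p_even_one hσ hs]
    _ ≤ _ := by exact_mod_cast hu _

end Rates

end Kesten

theorem stmt8 {X : Type} {G : Type*} [Group G] [Fintype X] [Nonempty X]
    (π : FreeSemigroup X →ₙ* G) (hπ : Function.Surjective π)
    (hsym : IsSymmetricChoice π) :
    (IsAmenableGroup G ↔ gammaRate π = Fintype.card X) ∧
    (IsAmenableGroup G ↔ ∃ g : G, lambdaRate π g = Fintype.card X) ∧
    (IsAmenableGroup G ↔ ∀ g : G, lambdaRate π g = Fintype.card X) := by
  obtain ⟨σ, hσ, hs⟩ := hsym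
  have hlam : IsAmenableGroup G → ∀ g : G, lambdaRate π g = Fintype.card X := by
    intro hG g
    obtain ⟨w, rfl⟩ := hπ g
    exact Kesten.rate_eq_of_amenable hG hσ hs (Kesten.lambdaFn_one_le π w)
      (Kesten.lambdaFn_le_card π _)
  have hgam : IsAmenableGroup G → gammaRate π = Fintype.card X := by
    intro hG
    obtain ⟨w, hw⟩ := hπ 1
    exact Kesten.rate_eq_of_amenable hG hσ hs (Kesten.lambdaFn_one_le_gammaFn π hw)
      (Kesten.gammaFn_le_card hσ hs)
  have hgap : ¬ IsAmenableGroup G → ∃ D r : ℝ, 0 < D ∧ 0 < r ∧ r < Fintype.card X ∧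
      ∀ g, ∀ n > 0, (lambdaFn π g n : ℝ) ≤ D * r ^ n := by
    intro hG
    obtain ⟨C, r, hC, hr, hrd, h⟩ := not_not.1 (mt (Kesten.amenable_of_large hπ hs) hG)
    obtain ⟨D, hD, h⟩ := Kesten.lambdaFn_le_of_gap hσ hs hC hr h
    exact ⟨D, r, hD, hr, hrd, h⟩
  have hlam' : ∀ g : G, lambdaRate π g = Fintype.card X → IsAmenableGroup G := by
    intro g hg
    by_contra hG
    obtain ⟨D, r, hD, hr, hrd, h⟩ := hgap hG
    refine absurd (Kesten.limsup_root_le (u := lambdaFn π g) hD hr ?_)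
      (not_le.2 (hrd.trans_eq hg.symm))
    filter_upwards [eventually_gt_atTop 0] with n hn
    have h2 : (1 : ℝ) ≤ n := by exact_mod_cast hn
    refine (h g n hn).trans ?_
    gcongr
    exact le_mul_of_one_le_right hD.le h2
  have hgam' : gammaRate π = Fintype.card X → IsAmenableGroup G := by
    intro hg
    by_contra hG
    obtain ⟨D, r, hD, hr, hrd, h⟩ := hgap hG
    refine absurd (Kesten.limsup_root_le (u := gammaFn π) hD hr ?_)
      (not_le.2 (hrd.trans_eq hg.symm))
    filter_upwards [eventually_gt_atTop 0] with n hn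
    calc (gammaFn π n : ℝ) ≤ n * lambdaFn π 1 n := by exact_mod_cast Kesten.gammaFn_le hσ hs n
      _ ≤ n * (D * r ^ n) := by gcongr; exact h 1 n hn
      _ = D * n * r ^ n := by ring
  exact ⟨⟨hgam, hgam'⟩, ⟨fun hG => ⟨1, hlam hG 1⟩, fun ⟨g, hg⟩ => hlam' g hg⟩,
    ⟨hlam, fun h => hlam' 1 (h 1)⟩⟩
end
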